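/- arXiv:math/0602211 — 2 statements merged into one kernel-verified Lean document; each statement's English description precedes it below -/
import Mathlib

section
/- (Theorem 2) Assume the transition densities a_t = a are the same for all t, that x ↦ a(x,·) is continuous in the L₁-norm and satisfies condition (19), and that condition (21) holds. Then for every ε > 0 there exist constants c₁ and c₂ such that, for all times t and all sample sizes N, P[‖f^N_{t|t} − f_{t|t}‖₁ > ε] ≤ c₁ exp(−c₂ N). -/
open MeasureTheory ProbabilityTheory

/-- The Markov operator `A_t*`. -/
noncomputable def markovOp {α : Type*} [MeasurableSpace α] (μ : Measure α)
    (a : α → α → ℝ) (f : α → ℝ) : α → ℝ :=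
  fun x => ∫ x', f x' * a x' x ∂μ

/-- The Bayes operator `B(f, b)`. -/
noncomputable def bayesOp {α : Type*} [MeasurableSpace α] (μ : Measure α)
    (f b : α → ℝ) : α → ℝ :=
  fun x => f x * b x / ∫ x', f x' * b x' ∂μ

/-- The true filter densities: `f_{0|0} = a_0` and
`f_{t|t} = B(A_t* f_{t-1|t-1}, b_t)` (the observations being absorbed into `b_t`). -/
noncomputable def trueFilter {α : Type*} [MeasurableSpace α] (μ : Measure α)
    (a0 : α → ℝ) (a : ℕ → α → α → ℝ) (b : ℕ → α → ℝ) : ℕ → α → ℝ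
  | 0 => a0
  | (t + 1) => bayesOp μ (markovOp μ (a (t + 1)) (trueFilter μ a0 a b t)) (b (t + 1))

/-- The particle filter densities: `f^N_{0|0} = a_0` and
`f^N_{t|t} = B(A_t* E_N(f^N_{t-1|t-1}), b_t)`, where `E_N` is the empirical
distribution of the particles `(X_{j,t-1})_{j≤N}` at time `t-1`. -/
noncomputable def particleFilter {α Ω : Type*} [MeasurableSpace α] (μ : Measure α)
    (a0 : α → ℝ) (a : ℕ → α → α → ℝ) (b : ℕ → α → ℝ)
    {N : ℕ} (X : ℕ → Fin N → Ω → α) : ℕ → Ω → α → ℝ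
  | 0 => fun _ => a0
  | (t + 1) => fun ω =>
      bayesOp μ (fun x => (N : ℝ)⁻¹ * ∑ j, a (t + 1) (X t j ω) x) (b (t + 1))

/-- The σ-field generated by the particles before time `t`. -/
def pastFiltration {α Ω : Type*} [MeasurableSpace α] [MeasurableSpace Ω]
    {N : ℕ} (X : ℕ → Fin N → Ω → α) (t : ℕ) : MeasurableSpace Ω :=
  ⨆ s : Fin t, MeasurableSpace.comap (fun ω => fun j : Fin N => X s j ω) inferInstance

/-!
Dividing the transition density by the reference density `h` gives test functions
`x ↦ a x y / h y` with values in `[0, Ca]`, so, pointwise in `y`, the normalised sampling error of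
the predictive density is a conditionally centred average of `N` bounded variables and is
sub-Gaussian with parameter of order `1 / N`. Jensen's inequality for the probability density `h`
turns this into an exponential tail for the `L¹` norm of the sampling error of a single step.

One Bayes update amplifies `L¹` errors by at most `2 * Cb`, which would accumulate over time. But
filters started from different densities merge: one transition brings the ratio of the two
densities into `[γ, γ⁻¹]`, where `γ = ca / Ca`, each further transition contracts the oscillation
of that ratio by `1 - γ`, and a Bayes update does not change it. Hence only the sampling errors of
the last `k + 1` steps matter, with `k` independent of the time and of `N`, and a union bound over
these steps concludes.
-/

/-! ### Densities and their `L¹` distance -/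

/-- `f` is a probability density with respect to `μ`. -/
structure IsProbDensity {α : Type*} [MeasurableSpace α] (μ : Measure α) (f : α → ℝ) : Prop where
  measurable : Measurable f
  nonneg : ∀ x, 0 ≤ f x
  integral_eq_one : ∫ x, f x ∂μ = 1

/-- The `L¹(μ)` distance `‖f - g‖₁`. -/
noncomputable def l1Dist {α : Type*} [MeasurableSpace α] (μ : Measure α) (f g : α → ℝ) : ℝ :=
  ∫ x, |f x - g x| ∂μ

section Density

variable {α : Type*} [MeasurableSpace α] {μ : Measure α} {f g k : α → ℝ}

namespace IsProbDensity

lemma integrable (hf : IsProbDensity μ f) : Integrable f μ :=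
  .of_integral_ne_zero (hf.integral_eq_one ▸ one_ne_zero)

lemma nonempty (hf : IsProbDensity μ f) : Nonempty α := by
  by_contra hα
  rw [not_nonempty_iff] at hα
  simpa [Measure.eq_zero_of_isEmpty μ] using hf.integral_eq_one

lemma isProbabilityMeasure_withDensity (hf : IsProbDensity μ f) :
    IsProbabilityMeasure (μ.withDensity fun x => ENNReal.ofReal (f x)) := by
  constructor
  rw [withDensity_apply _ MeasurableSet.univ, Measure.restrict_univ,
    ← ofReal_integral_eq_lintegral_ofReal hf.integrable (ae_of_all _ hf.nonneg),
    hf.integral_eq_one, ENNReal.ofReal_one]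

lemma integral_withDensity (hf : IsProbDensity μ f) (φ : α → ℝ) :
    ∫ x, φ x ∂μ.withDensity (fun x => ENNReal.ofReal (f x)) = ∫ x, φ x * f x ∂μ := by
  rw [integral_withDensity_eq_integral_toReal_smul hf.measurable.ennreal_ofReal
    (ae_of_all _ fun _ => ENNReal.ofReal_lt_top)]
  simp only [ENNReal.toReal_ofReal (hf.nonneg _), smul_eq_mul, mul_comm]

lemma average {ι : Type*} [Fintype ι] [Nonempty ι] {u : ι → α → ℝ}
    (hu : ∀ i, IsProbDensity μ (u i)) :
    IsProbDensity μ fun x => (Fintype.card ι : ℝ)⁻¹ * ∑ i, u i x where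
  measurable := (Finset.measurable_sum _ fun i _ => (hu i).measurable).const_mul _
  nonneg x := mul_nonneg (by positivity) (Finset.sum_nonneg fun i _ => (hu i).nonneg x)
  integral_eq_one := by
    rw [integral_const_mul, integral_finsetSum _ fun i _ => (hu i).integrable]
    simp [(hu _).integral_eq_one]

end IsProbDensity

lemma l1Dist_self : l1Dist μ f f = 0 := by simp [l1Dist]

lemma l1Dist_triangle (hf : Integrable f μ) (hg : Integrable g μ) (hk : Integrable k μ) :
    l1Dist μ f k ≤ l1Dist μ f g + l1Dist μ g k := by
  have hfg : Integrable (fun x => |f x - g x|) μ := (hf.sub hg).abs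
  have hgk : Integrable (fun x => |g x - k x|) μ := (hg.sub hk).abs
  calc l1Dist μ f k ≤ ∫ x, (|f x - g x| + |g x - k x|) ∂μ :=
        integral_mono (hf.sub hk).abs (hfg.add hgk) fun x => abs_sub_le (f x) (g x) (k x)
    _ = l1Dist μ f g + l1Dist μ g k := integral_add hfg hgk

end Density

/-! ### The Bayes operator -/

/-- Condition (21) for the single likelihood `b`: it is positive and `b x / b x' ≤ C`. -/
structure HasRatioBound {α : Type*} [MeasurableSpace α] (b : α → ℝ) (C : ℝ) : Prop where
  measurable : Measurable b
  pos : ∀ x, 0 < b x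
  le_mul : ∀ x x', b x ≤ C * b x'

namespace HasRatioBound

variable {α : Type*} [MeasurableSpace α] {μ : Measure α} {b u v : α → ℝ} {C : ℝ}

lemma one_le [Nonempty α] (hb : HasRatioBound b C) : 1 ≤ C := by
  obtain ⟨x⟩ := ‹Nonempty α›
  exact le_of_mul_le_mul_right (by simpa using hb.le_mul x x) (hb.pos x)

lemma integrable_mul (hb : HasRatioBound b C) (hu : Integrable u μ) :
    Integrable (fun x => u x * b x) μ := by
  cases isEmpty_or_nonempty α with
  | inl _ => simp [Measure.eq_zero_of_isEmpty μ]
  | inr hα =>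
    obtain ⟨x₀⟩ := hα
    refine hu.mul_bdd (c := C * b x₀) hb.measurable.aestronglyMeasurable (ae_of_all _ fun x => ?_)
    rw [Real.norm_of_nonneg (hb.pos x).le]
    exact hb.le_mul x x₀

lemma le_mul_integral (hb : HasRatioBound b C) (hu : IsProbDensity μ u) (x : α) :
    b x ≤ C * ∫ x', u x' * b x' ∂μ := by
  calc b x = ∫ x', u x' * b x ∂μ := by rw [integral_mul_const, hu.integral_eq_one, one_mul]
    _ ≤ ∫ x', C * (u x' * b x') ∂μ := by
      refine integral_mono (hu.integrable.mul_const _)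
        ((hb.integrable_mul hu.integrable).const_mul _) fun x' => ?_
      simpa only [mul_left_comm] using mul_le_mul_of_nonneg_left (hb.le_mul x x') (hu.nonneg x')
    _ = C * ∫ x', u x' * b x' ∂μ := integral_const_mul _ _

lemma integral_mul_pos (hb : HasRatioBound b C) (hu : IsProbDensity μ u) :
    0 < ∫ x, u x * b x ∂μ := by
  have := hu.nonempty
  have hC : 0 ≤ C := zero_le_one.trans hb.one_le
  exact pos_of_mul_pos_right
    ((hb.pos this.some).trans_le (hb.le_mul_integral hu this.some)) hC

lemma isProbDensity_bayesOp (hb : HasRatioBound b C) (hu : IsProbDensity μ u) :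
    IsProbDensity μ (bayesOp μ u b) where
  measurable := (hu.measurable.mul hb.measurable).div_const _
  nonneg x := div_nonneg (mul_nonneg (hu.nonneg x) (hb.pos x).le) (hb.integral_mul_pos hu).le
  integral_eq_one := by
    simp only [bayesOp]
    rw [integral_div, div_self (hb.integral_mul_pos hu).ne']

lemma abs_integral_mul_sub_le (hb : HasRatioBound b C) (hu : IsProbDensity μ u)
    (hv : IsProbDensity μ v) :
    |(∫ x, v x * b x ∂μ) - ∫ x, u x * b x ∂μ|
      ≤ C * l1Dist μ u v * ∫ x, u x * b x ∂μ := by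
  have hub := hb.integrable_mul hu.integrable
  have hvb := hb.integrable_mul hv.integrable
  calc |(∫ x, v x * b x ∂μ) - ∫ x, u x * b x ∂μ|
      = |∫ x, (v x * b x - u x * b x) ∂μ| := by rw [integral_sub hvb hub]
    _ ≤ ∫ x, |v x * b x - u x * b x| ∂μ := abs_integral_le_integral_abs
    _ ≤ ∫ x, |u x - v x| * (C * ∫ x', u x' * b x' ∂μ) ∂μ := by
      refine integral_mono (hvb.sub hub).abs
        ((hu.integrable.sub hv.integrable).abs.mul_const _) fun x => ?_
      simp only [← sub_mul, abs_mul, abs_of_pos (hb.pos x), abs_sub_comm (v x)]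
      exact mul_le_mul_of_nonneg_left (hb.le_mul_integral hu x) (abs_nonneg _)
    _ = C * l1Dist μ u v * ∫ x, u x * b x ∂μ := by rw [integral_mul_const, l1Dist]; ring

lemma abs_bayesOp_sub_le (hb : HasRatioBound b C) (hu : IsProbDensity μ u)
    (hv : IsProbDensity μ v) (x : α) :
    |bayesOp μ u b x - bayesOp μ v b x|
      ≤ C * |u x - v x| + C * l1Dist μ u v * bayesOp μ v b x := by
  have hU := hb.integral_mul_pos hu
  have hV := hb.integral_mul_pos hv
  have hbU : |b x / ∫ x, u x * b x ∂μ| ≤ C := by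
    rw [abs_of_pos (div_pos (hb.pos x) hU), div_le_iff₀ hU]
    exact hb.le_mul_integral hu x
  have hUV : |((∫ x, v x * b x ∂μ) - ∫ x, u x * b x ∂μ) / ∫ x, u x * b x ∂μ|
      ≤ C * l1Dist μ u v := by
    rw [abs_div, abs_of_pos hU, div_le_iff₀ hU]
    exact hb.abs_integral_mul_sub_le hu hv
  have hv0 := (hb.isProbDensity_bayesOp hv).nonneg x
  calc |bayesOp μ u b x - bayesOp μ v b x|
      = |b x / (∫ x, u x * b x ∂μ) * (u x - v x)
        + ((∫ x, v x * b x ∂μ) - ∫ x, u x * b x ∂μ) / (∫ x, u x * b x ∂μ)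
          * bayesOp μ v b x| := by
        congr 1
        simp only [bayesOp]
        field_simp
        ring
    _ ≤ C * |u x - v x| + C * l1Dist μ u v * bayesOp μ v b x := by
      refine (abs_add_le _ _).trans ?_
      rw [abs_mul, abs_mul, abs_of_nonneg hv0]
      gcongr

lemma l1Dist_bayesOp_le (hb : HasRatioBound b C) (hu : IsProbDensity μ u)
    (hv : IsProbDensity μ v) :
    l1Dist μ (bayesOp μ u b) (bayesOp μ v b) ≤ 2 * C * l1Dist μ u v := by
  have hBv := hb.isProbDensity_bayesOp hv
  have huv : Integrable (fun x => C * |u x - v x|) μ :=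
    (hu.integrable.sub hv.integrable).abs.const_mul C
  have hBv' := hBv.integrable.const_mul (C * l1Dist μ u v)
  calc l1Dist μ (bayesOp μ u b) (bayesOp μ v b)
      ≤ ∫ x, (C * |u x - v x| + C * l1Dist μ u v * bayesOp μ v b x) ∂μ :=
        integral_mono ((hb.isProbDensity_bayesOp hu).integrable.sub hBv.integrable).abs
          (huv.add hBv') (hb.abs_bayesOp_sub_le hu hv)
    _ = C * l1Dist μ u v + C * l1Dist μ u v := by
        rw [integral_add huv hBv', integral_const_mul, integral_const_mul, hBv.integral_eq_one,
          mul_one, l1Dist]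
    _ = 2 * C * l1Dist μ u v := by ring

end HasRatioBound

section ParametricMeasurability

variable {α β : Type*} [MeasurableSpace α] [MeasurableSpace β] {μ : Measure α} [SFinite μ]

lemma measurable_uncurry_bayesOp {u : β → α → ℝ} {b : α → ℝ}
    (hu : Measurable (Function.uncurry u)) (hb : Measurable b) :
    Measurable (Function.uncurry fun z => bayesOp μ (u z) b) := by
  have hub : Measurable fun p : β × α => u p.1 p.2 * b p.2 := hu.mul (hb.comp measurable_snd)
  exact hub.div (hub.stronglyMeasurable.integral_prod_right' (ν := μ)
    |>.measurable.comp measurable_fst)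

lemma measurable_uncurry_markovOp {f : β → α → ℝ} {a : α → α → ℝ}
    (hf : Measurable (Function.uncurry f)) (ha : Measurable (Function.uncurry a)) :
    Measurable (Function.uncurry fun z => markovOp μ a (f z)) := by
  have hfa : Measurable fun p : (β × α) × α => f p.1.1 p.2 * a p.2 p.1.2 :=
    (hf.comp (measurable_fst.fst.prodMk measurable_snd)).mul
      (ha.comp (measurable_snd.prodMk measurable_fst.snd))
  exact (hfa.stronglyMeasurable.integral_prod_right' (ν := μ)).measurable

end ParametricMeasurability

/-! ### The Markov operator -/

/-- `a` is a Markov transition density: each `a x'` is the density of the next state given the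
current state `x'`. -/
structure IsTransitionDensity {α : Type*} [MeasurableSpace α] (μ : Measure α)
    (a : α → α → ℝ) : Prop where
  measurable : Measurable (Function.uncurry a)
  isProbDensity : ∀ x', IsProbDensity μ (a x')

namespace IsTransitionDensity

variable {α : Type*} [MeasurableSpace α] {μ : Measure α} [SFinite μ] {a : α → α → ℝ}
  {f g : α → ℝ}

lemma integrable_prod (ha : IsTransitionDensity μ a) (hf : Integrable f μ) :
    Integrable (fun p : α × α => f p.1 * a p.1 p.2) (μ.prod μ) := by
  have hmeas : AEStronglyMeasurable (fun p : α × α => f p.1 * a p.1 p.2) (μ.prod μ) :=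
    hf.aestronglyMeasurable.comp_fst.mul ha.measurable.aestronglyMeasurable
  refine (integrable_prod_iff hmeas).2
    ⟨ae_of_all _ fun x => (ha.isProbDensity x).integrable.const_mul (f x), ?_⟩
  simpa only [Real.norm_eq_abs, abs_mul, abs_of_nonneg ((ha.isProbDensity _).nonneg _),
    integral_const_mul, (ha.isProbDensity _).integral_eq_one, mul_one] using hf.abs

lemma integrable_markovOp (ha : IsTransitionDensity μ a) (hf : Integrable f μ) :
    Integrable (markovOp μ a f) μ :=
  (ha.integrable_prod hf).integral_prod_right

lemma integral_markovOp (ha : IsTransitionDensity μ a) (hf : Integrable f μ) :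
    ∫ x, markovOp μ a f x ∂μ = ∫ x, f x ∂μ := by
  simp only [markovOp]
  rw [← integral_integral_swap (ha.integrable_prod hf)]
  simp only [integral_const_mul, (ha.isProbDensity _).integral_eq_one, mul_one]

lemma isProbDensity_markovOp (ha : IsTransitionDensity μ a) (hf : IsProbDensity μ f) :
    IsProbDensity μ (markovOp μ a f) where
  measurable := (measurable_uncurry_markovOp (f := fun _ : Unit => f)
    (hf.measurable.comp measurable_snd) ha.measurable).of_uncurry_left (x := ())
  nonneg x := integral_nonneg fun x' => mul_nonneg (hf.nonneg x') ((ha.isProbDensity x').nonneg x)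
  integral_eq_one := (ha.integral_markovOp hf.integrable).trans hf.integral_eq_one

lemma l1Dist_markovOp_le (ha : IsTransitionDensity μ a) (hf : Integrable f μ)
    (hg : Integrable g μ) : l1Dist μ (markovOp μ a f) (markovOp μ a g) ≤ l1Dist μ f g := by
  have hfg : Integrable (fun x => |f x - g x|) μ := (hf.sub hg).abs
  calc l1Dist μ (markovOp μ a f) (markovOp μ a g)
      ≤ ∫ x, markovOp μ a (fun x => |f x - g x|) x ∂μ := by
        refine integral_mono_ae ((ha.integrable_markovOp hf).sub (ha.integrable_markovOp hg)).abs
          (ha.integrable_markovOp hfg) ?_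
        filter_upwards [(ha.integrable_prod hf).prod_left_ae, (ha.integrable_prod hg).prod_left_ae]
          with x hfx hgx
        simp only [markovOp]
        rw [← integral_sub hfx hgx]
        refine abs_integral_le_integral_abs.trans_eq (integral_congr_ae (ae_of_all _ fun x' => ?_))
        simp only [← sub_mul, abs_mul, abs_of_nonneg ((ha.isProbDensity x').nonneg x)]
    _ = l1Dist μ f g := ha.integral_markovOp hfg

end IsTransitionDensity

/-! ### Forgetting of the initial density -/

/-- Condition (19): the transition density `a` lies between `c * h` and `C * h` for a reference
probability density `h`. -/
structure IsMixingDensity {α : Type*} [MeasurableSpace α] (μ : Measure α) (a : α → α → ℝ)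
    (h : α → ℝ) (c C : ℝ) : Prop extends IsTransitionDensity μ a where
  pos : 0 < c
  isProbDensity_ref : IsProbDensity μ h
  lower : ∀ x' x, c * h x ≤ a x' x
  upper : ∀ x' x, a x' x ≤ C * h x

namespace IsMixingDensity

variable {α : Type*} [MeasurableSpace α] {μ : Measure α} {a : α → α → ℝ} {f g h : α → ℝ}
  {c C : ℝ}

lemma le_const (ha : IsMixingDensity μ a h c C) : c ≤ C := by
  have hh := ha.isProbDensity_ref
  have x₀ := hh.nonempty.some
  have hle : ∫ x, c * h x ∂μ ≤ ∫ x, C * h x ∂μ :=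
    integral_mono (hh.integrable.const_mul _) (hh.integrable.const_mul _)
      fun x => (ha.lower x₀ x).trans (ha.upper x₀ x)
  simpa only [integral_const_mul, hh.integral_eq_one, mul_one] using hle

lemma const_pos (ha : IsMixingDensity μ a h c C) : 0 < C := ha.pos.trans_le ha.le_const

lemma div_le_one (ha : IsMixingDensity μ a h c C) : c / C ≤ 1 :=
  (div_le_one₀ ha.const_pos).2 ha.le_const

lemma measurable_left (ha : IsMixingDensity μ a h c C) (y : α) : Measurable fun x => a x y :=
  ha.measurable.comp (measurable_id.prodMk measurable_const)

lemma integrable_mul (ha : IsMixingDensity μ a h c C) (hf : Integrable f μ) (y : α) :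
    Integrable (fun x => f x * a x y) μ :=
  hf.mul_bdd (c := C * h y) (ha.measurable_left y).aestronglyMeasurable <| ae_of_all _ fun x => by
    rw [Real.norm_of_nonneg ((ha.isProbDensity x).nonneg y)]
    exact ha.upper x y

lemma mul_integral_le_markovOp (ha : IsMixingDensity μ a h c C) (hf : Integrable f μ)
    (hf0 : ∀ x, 0 ≤ f x) (y : α) : c * h y * ∫ x, f x ∂μ ≤ markovOp μ a f y := by
  rw [← integral_const_mul]
  refine integral_mono (hf.const_mul _) (ha.integrable_mul hf y) fun x => ?_
  simpa only [mul_comm] using mul_le_mul_of_nonneg_left (ha.lower x y) (hf0 x)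

lemma markovOp_le_mul_integral (ha : IsMixingDensity μ a h c C) (hf : Integrable f μ)
    (hf0 : ∀ x, 0 ≤ f x) (y : α) : markovOp μ a f y ≤ C * h y * ∫ x, f x ∂μ := by
  rw [← integral_const_mul]
  refine integral_mono (ha.integrable_mul hf y) (hf.const_mul _) fun x => ?_
  simpa only [mul_comm] using mul_le_mul_of_nonneg_left (ha.upper x y) (hf0 x)

lemma mul_markovOp_le_markovOp (ha : IsMixingDensity μ a h c C) (hg : IsProbDensity μ g)
    (hf : Integrable f μ) (hf0 : ∀ x, 0 ≤ f x) (y : α) :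
    c / C * (∫ x, f x ∂μ) * markovOp μ a g y ≤ markovOp μ a f y := by
  have hC := ha.const_pos
  have hc := ha.pos
  have hf1 : 0 ≤ ∫ x, f x ∂μ := integral_nonneg hf0
  calc c / C * (∫ x, f x ∂μ) * markovOp μ a g y
      ≤ c / C * (∫ x, f x ∂μ) * (C * h y * ∫ x, g x ∂μ) := by
        gcongr
        exact ha.markovOp_le_mul_integral hg.integrable hg.nonneg y
    _ = c * h y * ∫ x, f x ∂μ := by rw [hg.integral_eq_one]; field_simp
    _ ≤ markovOp μ a f y := ha.mul_integral_le_markovOp hf hf0 y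

lemma mul_sub_mul_markovOp_le {k l : ℝ} {u : α → ℝ} (ha : IsMixingDensity μ a h c C)
    (hf : IsProbDensity μ f) (hg : IsProbDensity μ g) (hu : IsProbDensity μ u)
    (hle : ∀ x, k * g x ≤ l * f x) (y : α) :
    c / C * (l - k) * markovOp μ a u y ≤ l * markovOp μ a f y - k * markovOp μ a g y := by
  have hlf := hf.integrable.const_mul l
  have hkg := hg.integrable.const_mul k
  have hsub : ∫ x, (l * f x - k * g x) ∂μ = l - k := by
    rw [integral_sub hlf hkg, integral_const_mul, integral_const_mul, hf.integral_eq_one,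
      hg.integral_eq_one, mul_one, mul_one]
  calc c / C * (l - k) * markovOp μ a u y
      ≤ markovOp μ a (fun x => l * f x - k * g x) y :=
        hsub ▸ ha.mul_markovOp_le_markovOp hu (hlf.sub hkg) (fun x => sub_nonneg.2 (hle x)) y
    _ = l * markovOp μ a f y - k * markovOp μ a g y := by
        simp only [markovOp, sub_mul, mul_assoc]
        rw [integral_sub ((ha.integrable_mul hf.integrable y).const_mul l)
          ((ha.integrable_mul hg.integrable y).const_mul k), integral_const_mul,
          integral_const_mul]

end IsMixingDensity

/-- The ratio `f / g` takes values in some interval `[m, m * (1 + r)]`, i.e. the Hilbert projective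
distance of `f` and `g` is at most `log (1 + r)`; stated without division so that `g` may vanish. -/
def RatioOscLE {α : Type*} (r : ℝ) (f g : α → ℝ) : Prop :=
  ∃ m > 0, ∀ x, m * g x ≤ f x ∧ f x ≤ m * (1 + r) * g x

namespace RatioOscLE

variable {α : Type*} [MeasurableSpace α] {μ : Measure α} {f g h b : α → ℝ} {a : α → α → ℝ}
  {r c C : ℝ}

lemma exists_bounds (hfg : RatioOscLE r f g) (hf : IsProbDensity μ f) (hg : IsProbDensity μ g) :
    ∃ m > 0, m ≤ 1 ∧ 1 ≤ m * (1 + r) ∧ 0 ≤ r ∧ ∀ x, m * g x ≤ f x ∧ f x ≤ m * (1 + r) * g x := by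
  obtain ⟨m, hm, hbd⟩ := hfg
  have hm1 : m ≤ 1 := by
    simpa only [integral_const_mul, hg.integral_eq_one, hf.integral_eq_one, mul_one] using
      integral_mono (hg.integrable.const_mul m) hf.integrable fun x => (hbd x).1
  have hmr : 1 ≤ m * (1 + r) := by
    simpa only [integral_const_mul, hg.integral_eq_one, hf.integral_eq_one, mul_one] using
      integral_mono hf.integrable (hg.integrable.const_mul (m * (1 + r))) fun x => (hbd x).2
  have hr : 0 ≤ m * r := by linarith
  exact ⟨m, hm, hm1, hmr, nonneg_of_mul_nonneg_right hr hm, hbd⟩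

lemma l1Dist_le (hfg : RatioOscLE r f g) (hf : IsProbDensity μ f) (hg : IsProbDensity μ g) :
    l1Dist μ f g ≤ r := by
  obtain ⟨m, -, hm1, hmr, hr, hbd⟩ := hfg.exists_bounds hf hg
  calc l1Dist μ f g ≤ ∫ x, r * g x ∂μ := by
        refine integral_mono (hf.integrable.sub hg.integrable).abs (hg.integrable.const_mul r)
          fun x => abs_le.2 ?_
        have hg0 := hg.nonneg x
        obtain ⟨hlo, hhi⟩ := hbd x
        constructor <;> nlinarith [mul_nonneg (sub_nonneg.2 hm1) hr]
    _ = r := by rw [integral_const_mul, hg.integral_eq_one, mul_one]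

protected lemma bayesOp (hfg : RatioOscLE r f g) (hf : 0 < ∫ x, f x * b x ∂μ)
    (hg : 0 < ∫ x, g x * b x ∂μ) (hb : ∀ x, 0 ≤ b x) :
    RatioOscLE r (bayesOp μ f b) (bayesOp μ g b) := by
  obtain ⟨m, hm, hbd⟩ := hfg
  refine ⟨m * (∫ x, g x * b x ∂μ) / ∫ x, f x * b x ∂μ, div_pos (mul_pos hm hg) hf, fun x => ?_⟩
  obtain ⟨hlo, hhi⟩ := hbd x
  constructor
  · calc m * (∫ x, g x * b x ∂μ) / (∫ x, f x * b x ∂μ) * bayesOp μ g b x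
        = m * g x * b x / ∫ x, f x * b x ∂μ := by simp only [bayesOp]; field_simp
      _ ≤ bayesOp μ f b x := by
        have := hb x
        simp only [bayesOp]
        gcongr
  · calc bayesOp μ f b x ≤ m * (1 + r) * g x * b x / ∫ x, f x * b x ∂μ := by
          have := hb x
          simp only [bayesOp]
          gcongr
      _ = m * (∫ x, g x * b x ∂μ) / (∫ x, f x * b x ∂μ) * (1 + r) * bayesOp μ g b x := by
        simp only [bayesOp]; field_simp

protected lemma markovOp (hfg : RatioOscLE r f g) (ha : IsMixingDensity μ a h c C)
    (hf : IsProbDensity μ f) (hg : IsProbDensity μ g) :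
    RatioOscLE ((1 - c / C) * r) (markovOp μ a f) (markovOp μ a g) := by
  obtain ⟨m, hm, hm1, -, hr, hbd⟩ := hfg.exists_bounds hf hg
  have hγ : 0 < c / C := div_pos ha.pos ha.const_pos
  have hγ1 : 0 ≤ 1 - c / C := sub_nonneg.2 ha.div_le_one
  have hpos : 0 < m + c / C * (1 - m) := by nlinarith
  refine ⟨m + c / C * (1 - m), hpos, fun y => ?_⟩
  have hAg : 0 ≤ markovOp μ a g y :=
    integral_nonneg fun x => mul_nonneg (hg.nonneg x) ((ha.isProbDensity x).nonneg y)
  have hlo := ha.mul_sub_mul_markovOp_le (k := m) (l := 1) hf hg hg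
    (fun x => by simpa only [one_mul] using (hbd x).1) y
  have hhi := ha.mul_sub_mul_markovOp_le (k := 1) (l := m * (1 + r)) hg hf hg
    (fun x => by simpa only [one_mul] using (hbd x).2) y
  have hratio : m * (1 + r) - c / C * (m * (1 + r) - 1)
      ≤ (m + c / C * (1 - m)) * (1 + (1 - c / C) * r) := by
    nlinarith [mul_nonneg (mul_nonneg hγ.le (sub_nonneg.2 hm1)) (mul_nonneg hγ1 hr)]
  have := mul_le_mul_of_nonneg_right hratio hAg
  constructor <;> linarith

end RatioOscLE

lemma ratioOscLE_markovOp {α : Type*} [MeasurableSpace α] {μ : Measure α} {a : α → α → ℝ}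
    {f g h : α → ℝ} {c C : ℝ} (ha : IsMixingDensity μ a h c C)
    (hf : IsProbDensity μ f) (hg : IsProbDensity μ g) :
    RatioOscLE ((c / C)⁻¹ ^ 2 - 1) (markovOp μ a f) (markovOp μ a g) := by
  have hγ : 0 < c / C := div_pos ha.pos ha.const_pos
  refine ⟨c / C, hγ, fun y => ⟨?_, ?_⟩⟩
  · simpa only [hf.integral_eq_one, mul_one] using
      ha.mul_markovOp_le_markovOp hg hf.integrable hf.nonneg y
  · have hle := ha.mul_markovOp_le_markovOp hf hg.integrable hg.nonneg y
    rw [hg.integral_eq_one, mul_one, ← le_div_iff₀' hγ] at hle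
    refine hle.trans_eq ?_
    generalize c / C = γ at hγ ⊢
    field_simp
    ring

lemma trueFilter_add {α : Type*} [MeasurableSpace α] {μ : Measure α} {a0 : α → ℝ}
    {a : ℕ → α → α → ℝ} {b : ℕ → α → ℝ} (s n : ℕ) :
    trueFilter μ a0 a b (s + n)
      = trueFilter μ (trueFilter μ a0 a b s) (fun i => a (s + i)) (fun i => b (s + i)) n := by
  induction n with
  | zero => rfl
  | succ n ih => rw [← add_assoc, trueFilter, ih]; rfl

section Filter

variable {α : Type*} [MeasurableSpace α] {μ : Measure α} [SFinite μ] {a : ℕ → α → α → ℝ}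
  {b h : ℕ → α → ℝ} {f g : α → ℝ} {c C Cb : ℝ}

lemma isProbDensity_trueFilter (ha : ∀ t, IsTransitionDensity μ (a t))
    (hb : ∀ t, HasRatioBound (b t) Cb) (hf : IsProbDensity μ f) :
    ∀ t, IsProbDensity μ (trueFilter μ f a b t)
  | 0 => hf
  | t + 1 => (hb _).isProbDensity_bayesOp <|
      (ha _).isProbDensity_markovOp (isProbDensity_trueFilter ha hb hf t)

lemma ratioOscLE_trueFilter_succ (ha : ∀ t, IsMixingDensity μ (a t) (h t) c C)
    (hb : ∀ t, HasRatioBound (b t) Cb) (hf : IsProbDensity μ f) (hg : IsProbDensity μ g) (n : ℕ) :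
    RatioOscLE ((1 - c / C) ^ n * ((c / C)⁻¹ ^ 2 - 1)) (trueFilter μ f a b (n + 1))
      (trueFilter μ g a b (n + 1)) := by
  have ha' t := (ha t).toIsTransitionDensity
  have hF := isProbDensity_trueFilter ha' hb hf
  have hG := isProbDensity_trueFilter ha' hb hg
  have hpos {u} (hu : IsProbDensity μ u) (t) :=
    (hb t).integral_mul_pos ((ha' t).isProbDensity_markovOp hu)
  have hb0 t x := ((hb t).pos x).le
  induction n with
  | zero =>
    rw [pow_zero, one_mul]
    exact (ratioOscLE_markovOp (ha 1) hf hg).bayesOp (hpos hf 1) (hpos hg 1) (hb0 1)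
  | succ n ih =>
    rw [pow_succ', mul_assoc]
    exact (ih.markovOp (ha _) (hF _) (hG _)).bayesOp (hpos (hF _) _) (hpos (hG _) _) (hb0 _)

lemma l1Dist_trueFilter_succ_le (ha : ∀ t, IsMixingDensity μ (a t) (h t) c C)
    (hb : ∀ t, HasRatioBound (b t) Cb) (hf : IsProbDensity μ f) (hg : IsProbDensity μ g) (n : ℕ) :
    l1Dist μ (trueFilter μ f a b (n + 1)) (trueFilter μ g a b (n + 1))
      ≤ (1 - c / C) ^ n * ((c / C)⁻¹ ^ 2 - 1) :=
  have ha' t := (ha t).toIsTransitionDensity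
  (ratioOscLE_trueFilter_succ ha hb hf hg n).l1Dist_le (isProbDensity_trueFilter ha' hb hf _)
    (isProbDensity_trueFilter ha' hb hg _)

end Filter

/-! ### Concentration of the sampling error -/

section Subgaussian

variable {Ω β : Type*} [MeasurableSpace Ω] [MeasurableSpace β] {P : Measure Ω} {ν : Measure β}
  {c : NNReal}

lemma integrable_exp_mul_abs_of_hasSubgaussianMGF {Y : Ω → ℝ} (hY : HasSubgaussianMGF Y c P)
    (l : ℝ) : Integrable (fun ω => Real.exp (l * |Y ω|)) P :=
  integrable_exp_mul_abs (hY.integrable_exp_mul l) (hY.integrable_exp_mul (-l))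

lemma integral_exp_mul_abs_le_of_hasSubgaussianMGF {Y : Ω → ℝ} (hY : HasSubgaussianMGF Y c P)
    (l : ℝ) : ∫ ω, Real.exp (l * |Y ω|) ∂P ≤ 2 * Real.exp (c * l ^ 2 / 2) := by
  have hpos := hY.integrable_exp_mul l
  have hneg := hY.integrable_exp_mul (-l)
  calc ∫ ω, Real.exp (l * |Y ω|) ∂P
      ≤ ∫ ω, (Real.exp (l * Y ω) + Real.exp (-l * Y ω)) ∂P := by
        refine integral_mono (integrable_exp_mul_abs_of_hasSubgaussianMGF hY l) (hpos.add hneg)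
          fun ω => ?_
        rcases abs_choice (Y ω) with h | h <;> simp only [h, mul_neg, neg_mul] <;>
          linarith [Real.exp_pos (l * Y ω), Real.exp_pos (-(l * Y ω))]
    _ = mgf Y P l + mgf Y P (-l) := integral_add hpos hneg
    _ ≤ Real.exp (c * l ^ 2 / 2) + Real.exp (c * (-l) ^ 2 / 2) :=
        add_le_add (hY.mgf_le l) (hY.mgf_le (-l))
    _ = 2 * Real.exp (c * l ^ 2 / 2) := by rw [neg_sq]; ring

lemma exp_mul_integral_abs_le [IsProbabilityMeasure ν] {φ : β → ℝ} {l : ℝ} (hl : 0 < l)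
    (hφ : AEStronglyMeasurable φ ν) (hexp : Integrable (fun y => Real.exp (l * |φ y|)) ν) :
    Real.exp (l * ∫ y, |φ y| ∂ν) ≤ ∫ y, Real.exp (l * |φ y|) ∂ν := by
  have hint : Integrable (fun y => l * |φ y|) ν := by
    refine hexp.mono' (hφ.norm.const_mul l) (ae_of_all _ fun y => ?_)
    rw [Real.norm_of_nonneg (by positivity)]
    linarith [Real.add_one_le_exp (l * |φ y|)]
  rw [← integral_const_mul]
  exact convexOn_exp.map_integral_le Real.continuous_exp.continuousOn isClosed_univ
    (ae_of_all _ fun _ => Set.mem_univ _) hint hexp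

variable [IsFiniteMeasure P] [IsProbabilityMeasure ν] {Z : Ω → β → ℝ}

lemma integrable_prod_exp_mul_abs_of_hasSubgaussianMGF (hZ : Measurable (Function.uncurry Z))
    (hsub : ∀ y, HasSubgaussianMGF (Z · y) c P) (l : ℝ) :
    Integrable (fun p : Ω × β => Real.exp (l * |Z p.1 p.2|)) (P.prod ν) := by
  have hmeas : Measurable fun p : Ω × β => Real.exp (l * |Z p.1 p.2|) :=
    (hZ.abs.const_mul l).exp
  refine (integrable_prod_iff' hmeas.aestronglyMeasurable).2
    ⟨ae_of_all _ fun y => integrable_exp_mul_abs_of_hasSubgaussianMGF (hsub y) l, ?_⟩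
  simp only [Real.norm_eq_abs, Real.abs_exp]
  refine Integrable.of_bound hmeas.stronglyMeasurable.integral_prod_left'.aestronglyMeasurable
    (2 * Real.exp (c * l ^ 2 / 2)) (ae_of_all _ fun y => ?_)
  rw [Real.norm_of_nonneg (integral_nonneg fun _ => (Real.exp_pos _).le)]
  exact integral_exp_mul_abs_le_of_hasSubgaussianMGF (hsub y) l

lemma measureReal_lt_integral_abs_le (hZ : Measurable (Function.uncurry Z))
    (hsub : ∀ y, HasSubgaussianMGF (Z · y) c P) (hc : 0 < c) {ε : ℝ} (hε : 0 < ε) :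
    P.real {ω | ε < ∫ y, |Z ω y| ∂ν} ≤ 2 * Real.exp (-(ε ^ 2 / (2 * c))) := by
  have hc' : (0 : ℝ) < c := hc
  set l : ℝ := ε / c with hl_def
  have hl : 0 < l := div_pos hε hc'
  have hexp := integrable_prod_exp_mul_abs_of_hasSubgaussianMGF (ν := ν) hZ hsub l
  have hmean : ∫ ω, ∫ y, Real.exp (l * |Z ω y|) ∂ν ∂P ≤ 2 * Real.exp (c * l ^ 2 / 2) := by
    rw [integral_integral_swap hexp]
    calc ∫ y, ∫ ω, Real.exp (l * |Z ω y|) ∂P ∂ν ≤ ∫ _, 2 * Real.exp (c * l ^ 2 / 2) ∂ν :=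
          integral_mono hexp.integral_prod_right (integrable_const _)
            fun y => integral_exp_mul_abs_le_of_hasSubgaussianMGF (hsub y) l
      _ = 2 * Real.exp (c * l ^ 2 / 2) := by simp
  -- Jensen's inequality exchanges the exponential with the integral over `ν`.
  have hjensen : ∀ᵐ ω ∂P, ω ∈ {ω | ε < ∫ y, |Z ω y| ∂ν} →
      ω ∈ {ω | Real.exp (l * ε) ≤ ∫ y, Real.exp (l * |Z ω y|) ∂ν} := by
    filter_upwards [hexp.prod_right_ae] with ω hω hlt
    refine le_trans ?_ (exp_mul_integral_abs_le hl hZ.of_uncurry_left.aestronglyMeasurable hω)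
    exact Real.exp_le_exp.2 (mul_le_mul_of_nonneg_left (le_of_lt hlt) hl.le)
  have hmarkov := mul_meas_ge_le_integral_of_nonneg
    (ae_of_all _ fun ω => integral_nonneg fun y => (Real.exp_pos (l * |Z ω y|)).le)
    hexp.integral_prod_left (Real.exp (l * ε))
  calc P.real {ω | ε < ∫ y, |Z ω y| ∂ν}
      ≤ P.real {ω | Real.exp (l * ε) ≤ ∫ y, Real.exp (l * |Z ω y|) ∂ν} :=
        ENNReal.toReal_mono (measure_ne_top _ _) (measure_mono_ae hjensen)
    _ ≤ 2 * Real.exp (c * l ^ 2 / 2) / Real.exp (l * ε) :=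
        (le_div_iff₀' (Real.exp_pos _)).2 (hmarkov.trans hmean)
    _ = 2 * Real.exp (-(ε ^ 2 / (2 * c))) := by
        rw [mul_div_assoc, ← Real.exp_sub]
        congr 2
        rw [hl_def]
        field_simp
        ring

end Subgaussian

section Hoeffding

variable {α : Type*} [MeasurableSpace α] {μ : Measure α} {f φ : α → ℝ} {u v : ℝ}

lemma IsProbDensity.integral_mul_mem_Icc (hf : IsProbDensity μ f) (hφ : Measurable φ)
    (hφuv : ∀ x, φ x ∈ Set.Icc u v) : ∫ x, φ x * f x ∂μ ∈ Set.Icc u v := by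
  have := hf.isProbabilityMeasure_withDensity
  rw [← hf.integral_withDensity]
  exact (convex_Icc u v).integral_mem isClosed_Icc (ae_of_all _ hφuv)
    (.of_mem_Icc u v hφ.aemeasurable (ae_of_all _ hφuv))

lemma IsProbDensity.integral_exp_mul_le (hf : IsProbDensity μ f) (hφ : Measurable φ)
    (hφuv : ∀ x, φ x ∈ Set.Icc u v) (l : ℝ) :
    ∫ x, Real.exp (l * φ x) * f x ∂μ
      ≤ Real.exp (l * (∫ x, φ x * f x ∂μ) + ((v - u) / 2) ^ 2 * l ^ 2 / 2) := by
  have := hf.isProbabilityMeasure_withDensity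
  have hoeffding := (hasSubgaussianMGF_of_mem_Icc
    (μ := μ.withDensity fun x => ENNReal.ofReal (f x)) hφ.aemeasurable
    (ae_of_all _ hφuv)).mgf_le l
  simp only [mgf, mul_sub, Real.exp_sub, integral_div] at hoeffding
  simp only [hf.integral_withDensity] at hoeffding
  rw [div_le_iff₀' (Real.exp_pos _), ← Real.exp_add] at hoeffding
  simpa [div_pow] using hoeffding

end Hoeffding

/-- Conditionally on `m`, the family `X` is an i.i.d. sample from the `μ`-density `F ω`; stated
through conditional expectations of products of bounded test functions. -/
def IsCondIIDSample {α Ω ι : Type*} [MeasurableSpace α] [MeasurableSpace Ω] [Fintype ι]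
    (μ : Measure α) (P : Measure Ω) (m : MeasurableSpace Ω) (X : ι → Ω → α) (F : Ω → α → ℝ) :
    Prop :=
  ∀ φ : ι → α → ℝ, (∀ j, Measurable (φ j)) → (∀ j, ∃ C, ∀ x, |φ j x| ≤ C) →
    P[(fun ω => ∏ j, φ j (X j ω)) | m] =ᵐ[P] fun ω => ∏ j, ∫ x, φ j x * F ω x ∂μ

namespace IsCondIIDSample

variable {α Ω ι : Type*} [MeasurableSpace α] {m mΩ : MeasurableSpace Ω} [Fintype ι]
  {μ : Measure α} {P : Measure Ω} {X : ι → Ω → α} {F : Ω → α → ℝ} {φ : α → ℝ} {u v : ℝ}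

lemma condExp_exp_mul_sum_le (hiid : IsCondIIDSample μ P m X F)
    (hF : ∀ ω, IsProbDensity μ (F ω)) (hφ : Measurable φ)
    (hφuv : ∀ x, φ x ∈ Set.Icc u v) (l : ℝ) :
    P[fun ω => Real.exp (l * ∑ j, φ (X j ω)) | m]
      ≤ᵐ[P] fun ω => Real.exp (Fintype.card ι *
        (l * (∫ x, φ x * F ω x ∂μ) + ((v - u) / 2) ^ 2 * l ^ 2 / 2)) := by
  have hbound x : |Real.exp (l * φ x)| ≤ Real.exp (|l| * max |u| |v|) := by
    rw [Real.abs_exp, Real.exp_le_exp]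
    refine (le_abs_self _).trans ?_
    rw [abs_mul]
    gcongr
    exact abs_le_max_abs_abs (hφuv x).1 (hφuv x).2
  have hcond := hiid (fun _ x => Real.exp (l * φ x)) (fun _ => (hφ.const_mul l).exp)
    fun _ => ⟨_, hbound⟩
  simp only [← Real.exp_sum, ← Finset.mul_sum, Finset.prod_const, Finset.card_univ] at hcond
  filter_upwards [hcond] with ω hω
  rw [hω, Real.exp_nat_mul]
  refine pow_le_pow_left₀ (integral_nonneg fun x => ?_) ((hF ω).integral_exp_mul_le hφ hφuv l) _
  exact mul_nonneg (Real.exp_pos _).le ((hF ω).nonneg x)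

variable [Nonempty ι]

lemma aestronglyMeasurable_integral (hiid : IsCondIIDSample μ P m X F)
    (hF : ∀ ω, IsProbDensity μ (F ω)) (hφ : Measurable φ) (hφb : ∃ C, ∀ x, |φ x| ≤ C) :
    AEStronglyMeasurable[m] (fun ω => ∫ x, φ x * F ω x ∂μ) P := by
  classical
  obtain ⟨j₀⟩ := ‹Nonempty ι›
  have hcond := hiid (fun j => if j = j₀ then φ else 1)
    (fun j => by split_ifs <;> [exact hφ; exact measurable_one])
    (fun j => by split_ifs <;> [exact hφb; exact ⟨1, by simp⟩])
  refine stronglyMeasurable_condExp.aestronglyMeasurable.congr (hcond.trans ?_)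
  refine ae_of_all _ fun ω => (Finset.prod_eq_single j₀ (fun j _ hj => ?_) (by simp)).trans ?_
  · simp [hj, (hF ω).integral_eq_one]
  · simp

lemma integrable_exp_mul_sum_sub_integral [IsFiniteMeasure P] (hm : m ≤ mΩ)
    (hiid : IsCondIIDSample μ P m X F) (hX : ∀ j, Measurable (X j))
    (hF : ∀ ω, IsProbDensity μ (F ω)) (hφ : Measurable φ) (hφuv : ∀ x, φ x ∈ Set.Icc u v) (l : ℝ) :
    Integrable (fun ω => Real.exp (l * ∑ j, (φ (X j ω) - ∫ x, φ x * F ω x ∂μ))) P := by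
  have hp := (hiid.aestronglyMeasurable_integral hF hφ
    ⟨max |u| |v|, fun x => abs_le_max_abs_abs (hφuv x).1 (hφuv x).2⟩).mono hm
  refine integrable_exp_mul_of_mem_Icc (a := ∑ _j : ι, (u - v)) (b := ∑ _j : ι, (v - u))
    (Finset.aemeasurable_fun_sum _ fun j _ => (hφ.comp (hX j)).aemeasurable.sub hp.aemeasurable)
    (ae_of_all _ fun ω => ?_)
  have hpω := (hF ω).integral_mul_mem_Icc hφ hφuv
  exact ⟨Finset.sum_le_sum fun j _ => sub_le_sub (hφuv _).1 hpω.2,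
    Finset.sum_le_sum fun j _ => sub_le_sub (hφuv _).2 hpω.1⟩

lemma condExp_exp_mul_sum_sub_integral_le [IsFiniteMeasure P] (hm : m ≤ mΩ)
    (hiid : IsCondIIDSample μ P m X F) (hX : ∀ j, Measurable (X j))
    (hF : ∀ ω, IsProbDensity μ (F ω)) (hφ : Measurable φ) (hφuv : ∀ x, φ x ∈ Set.Icc u v) (l : ℝ) :
    P[fun ω => Real.exp (l * ∑ j, (φ (X j ω) - ∫ x, φ x * F ω x ∂μ)) | m]
      ≤ᵐ[P] fun _ => Real.exp (Fintype.card ι * ((v - u) / 2) ^ 2 * l ^ 2 / 2) := by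
  have hp := hiid.aestronglyMeasurable_integral hF hφ
    ⟨max |u| |v|, fun x => abs_le_max_abs_abs (hφuv x).1 (hφuv x).2⟩
  set p : Ω → ℝ := fun ω => ∫ x, φ x * F ω x ∂μ with hp_def
  set f : Ω → ℝ := fun ω => Real.exp (-(l * Fintype.card ι * p ω))
  set g : Ω → ℝ := fun ω => Real.exp (l * ∑ j, φ (X j ω))
  have hfg : (fun ω => Real.exp (l * ∑ j, (φ (X j ω) - p ω))) = f * g := by
    ext ω
    simp only [f, g, Pi.mul_apply, ← Real.exp_add, Finset.sum_sub_distrib, Finset.sum_const,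
      Finset.card_univ, nsmul_eq_mul]
    congr 1
    ring
  have hint := hiid.integrable_exp_mul_sum_sub_integral hm hX hF hφ hφuv l
  have hg : Integrable g P := integrable_exp_mul_of_mem_Icc
    (a := ∑ _j : ι, u) (b := ∑ _j : ι, v)
    (Finset.aemeasurable_fun_sum _ fun j _ => (hφ.comp (hX j)).aemeasurable)
    (ae_of_all _ fun ω => ⟨Finset.sum_le_sum fun j _ => (hφuv _).1,
      Finset.sum_le_sum fun j _ => (hφuv _).2⟩)
  have hf : AEStronglyMeasurable[m] f P :=
    Real.continuous_exp.comp_aestronglyMeasurable (hp.const_mul _).neg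
  rw [hfg] at hint ⊢
  filter_upwards [condExp_mul_of_aestronglyMeasurable_left hf hint hg,
    hiid.condExp_exp_mul_sum_le hF hφ hφuv l] with ω hpull hω
  rw [hpull, Pi.mul_apply]
  refine (mul_le_mul_of_nonneg_left hω (Real.exp_pos _).le).trans_eq ?_
  rw [← Real.exp_add, hp_def]
  congr 1
  ring

lemma hasSubgaussianMGF_sum_sub_integral [IsProbabilityMeasure P] (hm : m ≤ mΩ)
    (hiid : IsCondIIDSample μ P m X F) (hX : ∀ j, Measurable (X j))
    (hF : ∀ ω, IsProbDensity μ (F ω)) (hφ : Measurable φ) (hφuv : ∀ x, φ x ∈ Set.Icc u v) :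
    HasSubgaussianMGF (fun ω => ∑ j, (φ (X j ω) - ∫ x, φ x * F ω x ∂μ))
      (Fintype.card ι * (‖v - u‖₊ / 2) ^ 2) P where
  integrable_exp_mul l := hiid.integrable_exp_mul_sum_sub_integral hm hX hF hφ hφuv l
  mgf_le l := by
    rw [mgf, ← integral_condExp hm]
    refine (integral_mono_ae integrable_condExp (integrable_const _)
      (hiid.condExp_exp_mul_sum_sub_integral_le hm hX hF hφ hφuv l)).trans_eq ?_
    simp [div_pow]

end IsCondIIDSample

/-- The predictive density `A* E_N` for the empirical distribution `E_N` of the particles `x`. -/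
noncomputable def empiricalMarkovOp {α ι : Type*} [Fintype ι] (a : α → α → ℝ) (x : ι → α) :
    α → ℝ :=
  fun y => (Fintype.card ι : ℝ)⁻¹ * ∑ j, a (x j) y

lemma empiricalMarkovOp_sub_markovOp_div {α ι : Type*} [MeasurableSpace α] [Fintype ι]
    [Nonempty ι] {μ : Measure α} (a : α → α → ℝ) (x : ι → α) (f : α → ℝ) (y : α) (r : ℝ) :
    (empiricalMarkovOp a x y - markovOp μ a f y) / r
      = (Fintype.card ι : ℝ)⁻¹ * ∑ j, (a (x j) y / r - ∫ x', a x' y / r * f x' ∂μ) := by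
  have hmarkov : ∫ x', a x' y / r * f x' ∂μ = markovOp μ a f y / r := by
    simp only [markovOp, ← integral_div, div_mul_eq_mul_div, mul_comm (f _)]
  rw [hmarkov, Finset.sum_sub_distrib, ← Finset.sum_div, Finset.sum_const, Finset.card_univ,
    nsmul_eq_mul, mul_sub, inv_mul_cancel_left₀ (Nat.cast_ne_zero.2 Fintype.card_ne_zero),
    empiricalMarkovOp, sub_div, mul_div_assoc]

lemma measurable_uncurry_empiricalMarkovOp {α Ω ι : Type*} [MeasurableSpace α]
    [MeasurableSpace Ω] [Fintype ι] {a : α → α → ℝ} {X : ι → Ω → α}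
    (ha : Measurable (Function.uncurry a)) (hX : ∀ j, Measurable (X j)) :
    Measurable (Function.uncurry fun ω => empiricalMarkovOp a (X · ω)) :=
  (Finset.measurable_fun_sum _ fun j _ =>
    ha.comp (((hX j).comp measurable_fst).prodMk measurable_snd)).const_mul _

namespace IsMixingDensity

variable {α Ω ι : Type*} [MeasurableSpace α] {m mΩ : MeasurableSpace Ω} [Fintype ι]
  {μ : Measure α} {P : Measure Ω} {X : ι → Ω → α} {F : Ω → α → ℝ} {a : α → α → ℝ} {h : α → ℝ}
  {c C : ℝ}

lemma div_mem_Icc (ha : IsMixingDensity μ a h c C) (x y : α) : a x y / h y ∈ Set.Icc 0 C :=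
  ⟨div_nonneg ((ha.isProbDensity x).nonneg y) (ha.isProbDensity_ref.nonneg y),
    div_le_of_le_mul₀ (ha.isProbDensity_ref.nonneg y) ha.const_pos.le (ha.upper x y)⟩

lemma eq_zero_of_ref_eq_zero (ha : IsMixingDensity μ a h c C) (x : α) {y : α} (hy : h y = 0) :
    a x y = 0 :=
  le_antisymm (by simpa only [hy, mul_zero] using ha.upper x y) ((ha.isProbDensity x).nonneg y)

lemma integral_abs_empiricalMarkovOp_sub_div (ha : IsMixingDensity μ a h c C) (x : ι → α)
    (f : α → ℝ) :
    ∫ y, |(empiricalMarkovOp a x y - markovOp μ a f y) / h y|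
        ∂μ.withDensity (fun y => ENNReal.ofReal (h y))
      = l1Dist μ (empiricalMarkovOp a x) (markovOp μ a f) := by
  rw [ha.isProbDensity_ref.integral_withDensity, l1Dist]
  congr 1 with y
  rw [abs_div, abs_of_nonneg (ha.isProbDensity_ref.nonneg y)]
  refine div_mul_cancel_of_imp fun hy => ?_
  simp [empiricalMarkovOp, markovOp, ha.eq_zero_of_ref_eq_zero _ hy]

variable [Nonempty ι] [IsProbabilityMeasure P]

lemma hasSubgaussianMGF_empiricalMarkovOp_sub_div (ha : IsMixingDensity μ a h c C) (hm : m ≤ mΩ)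
    (hiid : IsCondIIDSample μ P m X F) (hX : ∀ j, Measurable (X j))
    (hF : ∀ ω, IsProbDensity μ (F ω)) (y : α) :
    HasSubgaussianMGF
      (fun ω => (empiricalMarkovOp a (X · ω) y - markovOp μ a (F ω) y) / h y)
      (‖C‖₊ ^ 2 / (4 * Fintype.card ι)) P := by
  have hsum := hiid.hasSubgaussianMGF_sum_sub_integral hm hX hF
    ((ha.measurable_left y).div_const (h y)) (fun x => ha.div_mem_Icc x y)
  simp only [empiricalMarkovOp_sub_markovOp_div]
  have hconst : ‖C‖₊ ^ 2 / (4 * Fintype.card ι)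
      = (Fintype.card ι : NNReal)⁻¹ ^ 2 * (Fintype.card ι * (‖C - 0‖₊ / 2) ^ 2) := by
    rw [sub_zero]
    field_simp
    norm_num
  rw [hconst]
  exact hsum.const_mul (Fintype.card ι : ℝ)⁻¹

lemma measureReal_lt_l1Dist_empiricalMarkovOp_le [SFinite μ]
    (ha : IsMixingDensity μ a h c C) (hm : m ≤ mΩ) (hiid : IsCondIIDSample μ P m X F)
    (hX : ∀ j, Measurable (X j)) (hF : ∀ ω, IsProbDensity μ (F ω))
    (hFm : Measurable (Function.uncurry F)) {ε : ℝ} (hε : 0 < ε) :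
    P.real {ω | ε < l1Dist μ (empiricalMarkovOp a (X · ω)) (markovOp μ a (F ω))}
      ≤ 2 * Real.exp (-(2 * ε ^ 2 / C ^ 2) * Fintype.card ι) := by
  have hC : 0 < ‖C‖₊ := nnnorm_pos.2 ha.const_pos.ne'
  have := ha.isProbDensity_ref.isProbabilityMeasure_withDensity
  have htail := measureReal_lt_integral_abs_le
    (ν := μ.withDensity fun y => ENNReal.ofReal (h y))
    (((measurable_uncurry_empiricalMarkovOp ha.measurable hX).sub
      (measurable_uncurry_markovOp hFm ha.measurable)).div
        (ha.isProbDensity_ref.measurable.comp measurable_snd))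
    (ha.hasSubgaussianMGF_empiricalMarkovOp_sub_div hm hiid hX hF) (by positivity) hε
  have hexponent : ε ^ 2 / (2 * (‖C‖₊ ^ 2 / (4 * Fintype.card ι) : NNReal))
      = 2 * ε ^ 2 / C ^ 2 * Fintype.card ι := by
    push_cast
    rw [Real.norm_eq_abs, sq_abs]
    field_simp
    norm_num
  simpa only [ha.integral_abs_empiricalMarkovOp_sub_div, hexponent, neg_mul] using htail

end IsMixingDensity

/-! ### Error propagation over a finite window -/

section Window

variable {α : Type*} [MeasurableSpace α] {μ : Measure α} [SFinite μ] {a : ℕ → α → α → ℝ}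
  {b h : ℕ → α → ℝ} {u q : ℕ → α → ℝ} {c C Cb δ : ℝ}

lemma l1Dist_trueFilter_le_of_forall_lt (ha : ∀ t, IsTransitionDensity μ (a t))
    (hb : ∀ t, HasRatioBound (b t) Cb) (hu : ∀ t, IsProbDensity μ (u t))
    (hq : ∀ t, IsProbDensity μ (q t)) (hstep : ∀ t, u (t + 1) = bayesOp μ (q t) (b (t + 1)))
    (n : ℕ) (hδ : ∀ t < n, l1Dist μ (q t) (markovOp μ (a (t + 1)) (u t)) ≤ δ) :
    l1Dist μ (u n) (trueFilter μ (u 0) a b n)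
      ≤ 2 * Cb * δ * ∑ i ∈ Finset.range n, (2 * Cb) ^ i := by
  induction n with
  | zero => simp [trueFilter, l1Dist_self]
  | succ n ih =>
    have := (hu 0).nonempty
    have hCb : 0 ≤ Cb := zero_le_one.trans (hb 0).one_le
    have hT := isProbDensity_trueFilter ha hb (hu 0) n
    have hAu := (ha (n + 1)).isProbDensity_markovOp (hu n)
    have hAT := (ha (n + 1)).isProbDensity_markovOp hT
    calc l1Dist μ (u (n + 1)) (trueFilter μ (u 0) a b (n + 1))
        ≤ 2 * Cb * l1Dist μ (q n) (markovOp μ (a (n + 1)) (trueFilter μ (u 0) a b n)) := by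
          rw [hstep, trueFilter]
          exact (hb _).l1Dist_bayesOp_le (hq n) hAT
      _ ≤ 2 * Cb * (δ + 2 * Cb * δ * ∑ i ∈ Finset.range n, (2 * Cb) ^ i) := by
          gcongr
          refine (l1Dist_triangle (hq n).integrable hAu.integrable hAT.integrable).trans ?_
          refine add_le_add (hδ n n.lt_succ_self) ?_
          exact ((ha _).l1Dist_markovOp_le (hu n).integrable hT.integrable).trans
            (ih fun t ht => hδ t (ht.trans n.lt_succ_self))
      _ = 2 * Cb * δ * ∑ i ∈ Finset.range (n + 1), (2 * Cb) ^ i := by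
          rw [geom_sum_succ]
          ring

/-- Bound on the filter error when every sampling error in the last `k + 1` steps is at most `δ`:
the propagated sampling errors plus the remaining influence of the start of the window. -/
noncomputable def windowErrorBound (c C Cb : ℝ) (k : ℕ) (δ : ℝ) : ℝ :=
  2 * Cb * δ * (∑ i ∈ Finset.range (k + 1), (2 * Cb) ^ i)
    + (1 - c / C) ^ k * ((c / C)⁻¹ ^ 2 - 1)

lemma l1Dist_trueFilter_le_windowErrorBound (ha : ∀ t, IsMixingDensity μ (a t) (h t) c C)
    (hb : ∀ t, HasRatioBound (b t) Cb) (hu : ∀ t, IsProbDensity μ (u t))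
    (hq : ∀ t, IsProbDensity μ (q t)) (hstep : ∀ t, u (t + 1) = bayesOp μ (q t) (b (t + 1)))
    (hδ0 : 0 ≤ δ) (k t : ℕ)
    (hδ : ∀ s ∈ Finset.Ico (t - (k + 1)) t,
      l1Dist μ (q s) (markovOp μ (a (s + 1)) (u s)) ≤ δ) :
    l1Dist μ (u t) (trueFilter μ (u 0) a b t) ≤ windowErrorBound c C Cb k δ := by
  have ha' t := (ha t).toIsTransitionDensity
  simp only [Finset.mem_Ico] at hδ
  rcases lt_or_ge t (k + 1) with htk | hkt
  · have := (hu 0).nonempty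
    have hCb : 0 ≤ Cb := zero_le_one.trans (hb 0).one_le
    have hγ : 0 < c / C := div_pos (ha 0).pos (ha 0).const_pos
    have hγ1 : 0 ≤ 1 - c / C := sub_nonneg.2 (ha 0).div_le_one
    have hinv : 0 ≤ (c / C)⁻¹ ^ 2 - 1 :=
      sub_nonneg.2 (one_le_pow₀ ((one_le_inv₀ hγ).2 (ha 0).div_le_one))
    calc l1Dist μ (u t) (trueFilter μ (u 0) a b t)
        ≤ 2 * Cb * δ * ∑ i ∈ Finset.range t, (2 * Cb) ^ i :=
          l1Dist_trueFilter_le_of_forall_lt ha' hb hu hq hstep t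
            fun s hs => hδ s ⟨by lia, hs⟩
      _ ≤ 2 * Cb * δ * ∑ i ∈ Finset.range (k + 1), (2 * Cb) ^ i := by
          gcongr
      _ ≤ windowErrorBound c C Cb k δ := le_add_of_nonneg_right (by positivity)
  · obtain ⟨s, rfl⟩ := Nat.exists_eq_add_of_le' hkt
    have hT := isProbDensity_trueFilter ha' hb (hu 0) s
    have hrestart := isProbDensity_trueFilter (fun i => ha' (s + i)) (fun i => hb (s + i)) (hu s)
      (k + 1)
    have hsampling := l1Dist_trueFilter_le_of_forall_lt (u := fun i => u (s + i))
      (q := fun i => q (s + i)) (fun i => ha' (s + i)) (fun i => hb (s + i))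
      (fun i => hu (s + i)) (fun i => hq (s + i)) (fun i => hstep (s + i)) (k + 1)
      (fun i hi => hδ (s + i) ⟨by lia, by lia⟩)
    have hforget := l1Dist_trueFilter_succ_le (fun i => ha (s + i)) (fun i => hb (s + i))
      (hu s) hT k
    have hT' := isProbDensity_trueFilter (fun i => ha' (s + i)) (fun i => hb (s + i)) hT (k + 1)
    rw [trueFilter_add]
    exact (l1Dist_triangle (hu _).integrable hrestart.integrable hT'.integrable).trans
      (add_le_add hsampling hforget)

lemma exists_windowErrorBound_le (hc : 0 < c) (hcC : c ≤ C) (hCb : 0 < Cb) {ε : ℝ}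
    (hε : 0 < ε) : ∃ k δ, 0 < δ ∧ windowErrorBound c C Cb k δ ≤ ε := by
  have hγ : 0 < c / C := div_pos hc (hc.trans_le hcC)
  have hγ1 : c / C ≤ 1 := div_le_one_of_le₀ hcC (hc.trans_le hcC).le
  have hforget : Filter.Tendsto (fun k => (1 - c / C) ^ k * ((c / C)⁻¹ ^ 2 - 1)) Filter.atTop
      (nhds 0) := by
    simpa only [zero_mul] using (tendsto_pow_atTop_nhds_zero_of_lt_one (sub_nonneg.2 hγ1)
      (sub_lt_self 1 hγ)).mul_const ((c / C)⁻¹ ^ 2 - 1)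
  obtain ⟨k, hk⟩ := (hforget.eventually_le_const (half_pos hε)).exists
  have hS : 0 < ∑ i ∈ Finset.range (k + 1), (2 * Cb) ^ i :=
    Finset.sum_pos (fun i _ => by positivity) (by simp)
  refine ⟨k, ε / 2 / (2 * Cb * ∑ i ∈ Finset.range (k + 1), (2 * Cb) ^ i),
    div_pos (half_pos hε) (mul_pos (mul_pos two_pos hCb) hS), ?_⟩
  refine (add_le_add_right hk _).trans_eq ?_
  field_simp
  norm_num

end Window

/-! ### The particle filter -/

lemma pastFiltration_le {α Ω : Type*} [MeasurableSpace α] [mΩ : MeasurableSpace Ω] {N : ℕ}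
    {X : ℕ → Fin N → Ω → α} (hX : ∀ t j, Measurable (X t j)) (t : ℕ) :
    pastFiltration X t ≤ mΩ :=
  iSup_le fun s => (measurable_pi_lambda _ (hX s)).comap_le

section ParticleFilter

variable {α Ω : Type*} [MeasurableSpace α] {μ : Measure α} {a0 : α → ℝ}
  {a : ℕ → α → α → ℝ} {b h : ℕ → α → ℝ} {N : ℕ} {X : ℕ → Fin N → Ω → α} {c C Cb : ℝ}

lemma particleFilter_succ (t : ℕ) (ω : Ω) :
    particleFilter μ a0 a b X (t + 1) ω
      = bayesOp μ (empiricalMarkovOp (a (t + 1)) (X t · ω)) (b (t + 1)) := by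
  unfold empiricalMarkovOp
  rw [Fintype.card_fin, particleFilter]

lemma isProbDensity_particleFilter [NeZero N] (ha0 : IsProbDensity μ a0)
    (ha : ∀ t, IsTransitionDensity μ (a t)) (hb : ∀ t, HasRatioBound (b t) Cb) :
    ∀ t ω, IsProbDensity μ (particleFilter μ a0 a b X t ω)
  | 0, _ => ha0
  | t + 1, ω => by
    rw [particleFilter_succ]
    exact (hb _).isProbDensity_bayesOp (.average fun j => (ha _).isProbDensity (X t j ω))

variable [MeasurableSpace Ω] [SFinite μ]

lemma measurable_uncurry_particleFilter (ha0 : Measurable a0)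
    (ha : ∀ t, Measurable (Function.uncurry (a t))) (hb : ∀ t, Measurable (b t))
    (hX : ∀ t j, Measurable (X t j)) :
    ∀ t, Measurable (Function.uncurry (particleFilter μ a0 a b X t))
  | 0 => ha0.comp measurable_snd
  | t + 1 => by
    have hsucc : particleFilter μ a0 a b X (t + 1) = fun ω =>
        bayesOp μ (empiricalMarkovOp (a (t + 1)) (X t · ω)) (b (t + 1)) :=
      funext (particleFilter_succ t)
    rw [hsucc]
    exact measurable_uncurry_bayesOp (measurable_uncurry_empiricalMarkovOp (ha _) (hX t)) (hb _)

lemma measureReal_windowErrorBound_lt_l1Dist_le [NeZero N] {P : Measure Ω}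
    [IsProbabilityMeasure P] (ha0 : IsProbDensity μ a0)
    (ha : ∀ t, IsMixingDensity μ (a t) (h t) c C) (hb : ∀ t, HasRatioBound (b t) Cb)
    (hX : ∀ t j, Measurable (X t j))
    (hiid : ∀ t, IsCondIIDSample μ P (pastFiltration X t) (X t) (particleFilter μ a0 a b X t))
    (k t : ℕ) {δ : ℝ} (hδ : 0 < δ) :
    P.real {ω | windowErrorBound c C Cb k δ
        < l1Dist μ (particleFilter μ a0 a b X t ω) (trueFilter μ a0 a b t)}
      ≤ (k + 1) * (2 * Real.exp (-(2 * δ ^ 2 / C ^ 2) * N)) := by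
  have ha' t := (ha t).toIsTransitionDensity
  have hpf := isProbDensity_particleFilter (X := X) ha0 ha' hb
  have hpfm := measurable_uncurry_particleFilter (μ := μ) ha0.measurable
    (fun t => (ha t).measurable) (fun t => (hb t).measurable) hX
  let largeError (s : ℕ) : Set Ω := {ω | δ < l1Dist μ (empiricalMarkovOp (a (s + 1)) (X s · ω))
    (markovOp μ (a (s + 1)) (particleFilter μ a0 a b X s ω))}
  have hsub : {ω | windowErrorBound c C Cb k δ
      < l1Dist μ (particleFilter μ a0 a b X t ω) (trueFilter μ a0 a b t)}
      ⊆ ⋃ s ∈ Finset.Ico (t - (k + 1)) t, largeError s := by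
    intro ω
    contrapose!
    simp only [Set.mem_iUnion, not_exists, largeError, Set.mem_ofPred_eq, not_lt]
    exact l1Dist_trueFilter_le_windowErrorBound ha hb (hpf · ω)
      (fun s => .average fun j => (ha' (s + 1)).isProbDensity (X s j ω))
      (fun s => particleFilter_succ s ω) hδ.le k t
  calc P.real {ω | windowErrorBound c C Cb k δ
        < l1Dist μ (particleFilter μ a0 a b X t ω) (trueFilter μ a0 a b t)}
      ≤ P.real (⋃ s ∈ Finset.Ico (t - (k + 1)) t, largeError s) :=
        measureReal_mono hsub (measure_ne_top _ _)
    _ ≤ ∑ s ∈ Finset.Ico (t - (k + 1)) t, P.real (largeError s) :=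
        measureReal_biUnion_finset_le _ _
    _ ≤ (Finset.Ico (t - (k + 1)) t).card • (2 * Real.exp (-(2 * δ ^ 2 / C ^ 2) * N)) := by
        refine Finset.sum_le_card_nsmul _ _ _ fun s _ => ?_
        simpa only [Fintype.card_fin] using (ha (s + 1)).measureReal_lt_l1Dist_empiricalMarkovOp_le
          (pastFiltration_le hX s) (hiid s) (hX s) (hpf s) (hpfm s) hδ
    _ ≤ (k + 1) * (2 * Real.exp (-(2 * δ ^ 2 / C ^ 2) * N)) := by
        rw [nsmul_eq_mul, Nat.card_Ico]
        gcongr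
        exact_mod_cast (by lia : t - (t - (k + 1)) ≤ k + 1)

end ParticleFilter

theorem particle_filter_uniform_exponential_bound_general {α Ω : Type*} [MeasurableSpace α]
    [MeasurableSpace Ω] {μ : Measure α} [SFinite μ] {P : Measure Ω} [IsProbabilityMeasure P]
    {a0 : α → ℝ} {a : ℕ → α → α → ℝ} {b h : ℕ → α → ℝ} {ca Ca Cb : ℝ}
    (ha0 : IsProbDensity μ a0) (ha : ∀ t, IsMixingDensity μ (a t) (h t) ca Ca)
    (hb : ∀ t, HasRatioBound (b t) Cb) {X : (N : ℕ) → ℕ → Fin N → Ω → α}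
    (hX : ∀ N t j, Measurable (X N t j))
    (hiid : ∀ N t, IsCondIIDSample μ P (pastFiltration (X N) t) (X N t)
      (particleFilter μ a0 a b (X N) t))
    {ε : ℝ} (hε : 0 < ε) :
    ∃ c₁ c₂ : ℝ, 0 < c₂ ∧ ∀ t N : ℕ,
      P {ω | ε < l1Dist μ (particleFilter μ a0 a b (X N) t ω) (trueFilter μ a0 a b t)}
        ≤ ENNReal.ofReal (c₁ * Real.exp (-c₂ * N)) := by
  have := ha0.nonempty
  obtain ⟨k, δ, hδ, hkδ⟩ := exists_windowErrorBound_le (ha 0).pos (ha 0).le_const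
    (zero_lt_one.trans_le (hb 0).one_le) hε
  have hCa := (ha 0).const_pos
  refine ⟨(k + 1) * 2, 2 * δ ^ 2 / Ca ^ 2, by positivity, fun t N => ?_⟩
  obtain rfl | hN := eq_or_ne N 0
  · refine prob_le_one.trans (ENNReal.one_le_ofReal.2 ?_)
    rw [Nat.cast_zero, mul_zero, Real.exp_zero]
    linarith [(Nat.cast_nonneg k : (0 : ℝ) ≤ k)]
  · have : NeZero N := ⟨hN⟩
    rw [mul_assoc, ← ofReal_measureReal]
    refine ENNReal.ofReal_le_ofReal (le_trans (measureReal_mono fun ω hω => ?_)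
      (measureReal_windowErrorBound_lt_l1Dist_le ha0 ha hb (hX N) (hiid N) k t hδ))
    exact hkδ.trans_lt hω

/-- Theorem 2: if the transition densities are the same for all `t`, continuous in
the L¹-norm, and satisfy condition (19) (`c_a h ≤ a(x',·) ≤ C_a h`), and if
condition (21) holds (`C_b = sup_{t,x,x',y} b_t(x,y)/b_t(x',y) < ∞`), then for every
`ε > 0` there are constants `c₁, c₂` such that for all times `t` and all sample
sizes `N`, `P[‖f^N_{t|t} − f_{t|t}‖₁ > ε] ≤ c₁ exp(−c₂ N)`. -/
theorem particle_filter_uniform_exponential_bound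
    {α : Type*} [MeasurableSpace α] [MetricSpace α] [CompleteSpace α]
    [SecondCountableTopology α] [BorelSpace α]
    (μ : Measure α) [SigmaFinite μ]
    {Ω : Type*} [MeasurableSpace Ω] (P : Measure Ω) [IsProbabilityMeasure P]
    (a0 : α → ℝ) (a : α → α → ℝ) (b : ℕ → α → ℝ) (h : α → ℝ)
    (ca Ca Cb : ℝ) (hca : 0 < ca) (hcaCa : ca < Ca)
    (ha0_meas : Measurable a0) (ha0_nonneg : ∀ x, 0 ≤ a0 x)
    (ha0_int : Integrable a0 μ) (ha0_one : (∫ x, a0 x ∂μ) = 1)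
    (ha_meas : Measurable (Function.uncurry a))
    (ha_nonneg : ∀ x' x, 0 ≤ a x' x)
    (ha_kernel : ∀ x', ∫ x, a x' x ∂μ = 1)
    -- L¹-continuity of x ↦ a(x,·)
    (ha_cont : ∀ x₀ : α, ∀ δ > (0:ℝ), ∃ η > (0:ℝ), ∀ x, dist x x₀ < η →
      (∫ y, |a x y - a x₀ y| ∂μ) < δ)
    (hh_meas : Measurable h) (hh_nonneg : ∀ x, 0 ≤ h x)
    (hh_int : Integrable h μ) (hh_one : (∫ x, h x ∂μ) = 1)
    -- condition (19)
    (h19 : ∀ x' x, ca * h x ≤ a x' x ∧ a x' x ≤ Ca * h x)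
    -- condition (21)
    (hb_meas : ∀ t, Measurable (b t))
    (hb_pos : ∀ t x, 0 < b t x)
    (h21 : ∀ t x x', b t x ≤ Cb * b t x')
    -- the particle system
    (X : (N : ℕ) → ℕ → Fin N → Ω → α)
    (hX_meas : ∀ N t j, Measurable (X N t j))
    -- conditionally on the past, (X N t j)_j is an i.i.d. sample from f^N_{t|t}
    (hcond : ∀ (N t : ℕ) (φ : Fin N → α → ℝ), (∀ j, Measurable (φ j)) →
      (∀ j, ∃ C, ∀ x, |φ j x| ≤ C) →
      P[(fun ω => ∏ j, φ j (X N t j ω)) | pastFiltration (X N) t]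
        =ᵐ[P] fun ω => ∏ j, ∫ x, φ j x
          * particleFilter μ a0 (fun _ => a) b (X N) t ω x ∂μ) :
    ∀ ε : ℝ, 0 < ε → ∃ c₁ c₂ : ℝ, 0 < c₂ ∧ ∀ t N : ℕ,
      P {ω | ε < ∫ x, |particleFilter μ a0 (fun _ => a) b (X N) t ω x
            - trueFilter μ a0 (fun _ => a) b t x| ∂μ}
        ≤ ENNReal.ofReal (c₁ * Real.exp (-c₂ * N)) := by
  exact fun ε hε => particle_filter_uniform_exponential_bound_general (a := fun _ => a)
    (h := fun _ => h) ⟨ha0_meas, ha0_nonneg, ha0_one⟩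
    (fun _ =>
      { measurable := ha_meas
        isProbDensity := fun x' => ⟨ha_meas.of_uncurry_left, ha_nonneg x', ha_kernel x'⟩
        pos := hca
        isProbDensity_ref := ⟨hh_meas, hh_nonneg, hh_one⟩
        lower := fun x' x => (h19 x' x).1
        upper := fun x' x => (h19 x' x).2 })
    (fun t => ⟨hb_meas t, hb_pos t, h21 t⟩) hX_meas hcond hε
end

section
/- The asymptotic variance V_t of the particle filter with i.i.d. resampling, defined by V_0(ψ) = σ_0²(ψ) and V_t(ψ) = σ_t²(ψ) + p(y_t | y_{1:t-1})^{-2} V_{t-1}(L_t(ψ − m_t(ψ))), admits the representation V_t(ψ) = σ_t²(ψ) + Σ_{s=1}^t σ_{s-1}²( L_{s:t}(ψ − m_t(ψ)) ) / p(y_{s:t} | y_{1:s-1})², where L_{s:t} ψ(x_{s-1}) = ∫ ψ(x_t) ∏_{r=s}^t a_r(x_{r-1}, x_r) b_r(x_r, y_r) dμ(x_r) and p(y_{s:t} | y_{1:s-1}) = m_{s-1}(L_{s:t} 1). In particular this representation uses the identity m_{t-1}(L_t(ψ − m_t(ψ))) = 0. -/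
/-!
By Fubini, `L_t` is dual to the unnormalised filter update, so `m_{t-1}(L_t g) = p_t m_t(g)` for
every bounded measurable `g`, where `p_t = p(y_t | y_{1:t-1})`. Taking `g = ψ - m_t(ψ)` shows that
`L_t(ψ - m_t(ψ))` is already centred at time `t - 1`, so unrolling the recursion for `V` never
introduces a new centring constant. Taking `g = 1` along a composition of the `L_r` gives the chain
rule `p(y_{s:t+1} | y_{1:s-1}) = p(y_{s:t} | y_{1:s-1}) p_{t+1}`, which merges the denominators.
-/

open MeasureTheory

/-- The operator `L_t ψ(x_{t-1}) = ∫ a_t(x_{t-1}, x_t) b_t(x_t, y_t) ψ(x_t) dμ(x_t)`. -/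
noncomputable def obsOp {α : Type*} [MeasurableSpace α] (μ : Measure α)
    (a : ℕ → α → α → ℝ) (b : ℕ → α → ℝ) (t : ℕ) (ψ : α → ℝ) : α → ℝ :=
  fun x => ∫ x', a t x x' * (b t x' * ψ x') ∂μ

/-- The iterated operator: `obsOpComp μ a b n s = L_s ∘ L_{s+1} ∘ ⋯ ∘ L_{s+n-1}`,
so that `L_{s:t} = obsOpComp μ a b (t+1-s) s` for `s ≤ t`:
`L_{s:t}ψ(x_{s-1}) = ∫ ψ(x_t) ∏_{r=s}^t a_r(x_{r-1},x_r) b_r(x_r,y_r) dμ(x_r)`. -/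
noncomputable def obsOpComp {α : Type*} [MeasurableSpace α] (μ : Measure α)
    (a : ℕ → α → α → ℝ) (b : ℕ → α → ℝ) : ℕ → ℕ → (α → ℝ) → α → ℝ
  | 0, _, ψ => ψ
  | (n + 1), s, ψ => obsOp μ a b s (obsOpComp μ a b n (s + 1) ψ)

/-- The bounded measurable functions: the test functions on which the operators `L_t` act. -/
structure IsBoundedMeasurable {α : Type*} [MeasurableSpace α] (g : α → ℝ) : Prop where
  measurable : Measurable g
  bounded : ∃ C, ∀ x, |g x| ≤ C

/-- A jointly measurable signed kernel density whose `L¹(ν)` norms `∫ |k x y| dν(y)` are bounded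
uniformly in `x`, so that it acts on bounded functions of `y` and, dually, on integrable functions
of `x`. -/
structure IsBoundedKernel {α β : Type*} [MeasurableSpace α] [MeasurableSpace β] (ν : Measure β)
    (k : α → β → ℝ) : Prop where
  measurable : Measurable (Function.uncurry k)
  integrable : ∀ x, Integrable (k x) ν
  bounded : ∃ C, ∀ x, ∫ y, |k x y| ∂ν ≤ C

namespace IsBoundedMeasurable

variable {α : Type*} [MeasurableSpace α] {g : α → ℝ}

theorem const (c : ℝ) : IsBoundedMeasurable fun _ : α => c :=
  ⟨measurable_const, |c|, fun _ => le_rfl⟩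

theorem of_nonneg_of_le (hg : Measurable g) (h0 : ∀ x, 0 ≤ g x) (hC : ∃ C, ∀ x, g x ≤ C) :
    IsBoundedMeasurable g :=
  ⟨hg, hC.imp fun _ h x => (abs_of_nonneg (h0 x)).trans_le (h x)⟩

theorem sub_const (hg : IsBoundedMeasurable g) (c : ℝ) : IsBoundedMeasurable fun x => g x - c := by
  obtain ⟨C, hC⟩ := hg.bounded
  exact ⟨hg.measurable.sub_const c, C + |c|,
    fun x => (abs_sub _ _).trans (add_le_add_left (hC x) _)⟩

theorem mul_integrable (hg : IsBoundedMeasurable g) {μ : Measure α} {f : α → ℝ}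
    (hf : Integrable f μ) : Integrable (fun x => g x * f x) μ := by
  obtain ⟨C, hC⟩ := hg.bounded
  exact hf.bdd_mul hg.measurable.aestronglyMeasurable (.of_forall hC)

end IsBoundedMeasurable

namespace IsBoundedKernel

variable {α β : Type*} [MeasurableSpace α] [MeasurableSpace β] {ν : Measure β}
  {k : α → β → ℝ} {f : α → ℝ} {g : β → ℝ}

theorem of_integral_eq_one (hk : Measurable (Function.uncurry k)) (h0 : ∀ x y, 0 ≤ k x y)
    (h1 : ∀ x, ∫ y, k x y ∂ν = 1) : IsBoundedKernel ν k where
  measurable := hk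
  integrable x := .of_integral_ne_zero (by simp [h1])
  bounded := ⟨1, fun x => by simp only [abs_of_nonneg (h0 _ _), h1, le_refl]⟩

theorem mul_right (hk : IsBoundedKernel ν k) (hg : IsBoundedMeasurable g) :
    IsBoundedKernel ν fun x y => k x y * g y where
  measurable := hk.measurable.mul (hg.measurable.comp measurable_snd)
  integrable x := by simpa only [mul_comm] using hg.mul_integrable (hk.integrable x)
  bounded := by
    obtain ⟨C, hC⟩ := hk.bounded
    obtain ⟨D, hD⟩ := hg.bounded
    refine ⟨C * |D|, fun x => ?_⟩
    have hpointwise : ∀ y, |k x y * g y| ≤ |k x y| * |D| := fun y => by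
      rw [abs_mul]
      exact mul_le_mul_of_nonneg_left ((hD y).trans (le_abs_self D)) (abs_nonneg _)
    calc ∫ y, |k x y * g y| ∂ν
        ≤ ∫ y, |k x y| * |D| ∂ν :=
          integral_mono_of_nonneg (.of_forall fun _ => abs_nonneg _)
            ((hk.integrable x).abs.mul_const _) (.of_forall hpointwise)
      _ = (∫ y, |k x y| ∂ν) * |D| := integral_mul_const _ _
      _ ≤ C * |D| := by gcongr; exact hC x

variable [SFinite ν]

theorem isBoundedMeasurable_integral (hk : IsBoundedKernel ν k) :
    IsBoundedMeasurable fun x => ∫ y, k x y ∂ν := by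
  refine ⟨hk.measurable.stronglyMeasurable.integral_prod_right.measurable, ?_⟩
  exact hk.bounded.imp fun _ hC x => abs_integral_le_integral_abs.trans (hC x)

theorem integrable_prod {μ : Measure α} (hk : IsBoundedKernel ν k) (hf : Integrable f μ) :
    Integrable (fun z : α × β => f z.1 * k z.1 z.2) (μ.prod ν) := by
  have hmeas : AEStronglyMeasurable (fun z : α × β => f z.1 * k z.1 z.2) (μ.prod ν) :=
    hf.aestronglyMeasurable.comp_fst.mul hk.measurable.aestronglyMeasurable
  refine (integrable_prod_iff hmeas).2 ⟨.of_forall fun x => (hk.integrable x).const_mul (f x), ?_⟩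
  have hnorm : IsBoundedMeasurable fun x => ∫ y, |k x y| ∂ν :=
    isBoundedMeasurable_integral
      ⟨hk.measurable.abs, fun x => (hk.integrable x).abs, by simpa only [abs_abs] using hk.bounded⟩
  simpa only [norm_mul, Real.norm_eq_abs, integral_const_mul, mul_comm |f _| (∫ _, _ ∂ν)]
    using hnorm.mul_integrable hf.abs

theorem integral_integral_mul_comm {μ : Measure α} [SFinite μ] (hk : IsBoundedKernel ν k)
    (hf : Integrable f μ) (hg : IsBoundedMeasurable g) :
    ∫ x, (∫ y, k x y * g y ∂ν) * f x ∂μ = ∫ y, (∫ x, f x * k x y ∂μ) * g y ∂ν := by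
  calc ∫ x, (∫ y, k x y * g y ∂ν) * f x ∂μ
      = ∫ x, ∫ y, f x * (k x y * g y) ∂ν ∂μ := by simp only [integral_const_mul, mul_comm]
    _ = ∫ y, ∫ x, f x * (k x y * g y) ∂μ ∂ν :=
      integral_integral_swap ((hk.mul_right hg).integrable_prod hf)
    _ = ∫ y, (∫ x, f x * k x y ∂μ) * g y ∂ν := by simp only [← mul_assoc, integral_mul_const]

end IsBoundedKernel

/-- The filter expectation `m_t(ψ) = ∫ ψ f_{t|t} dμ`. -/
noncomputable def filterMean {α : Type*} [MeasurableSpace α] (μ : Measure α)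
    (a0 : α → ℝ) (a : ℕ → α → α → ℝ) (b : ℕ → α → ℝ) (t : ℕ) (ψ : α → ℝ) : ℝ :=
  ∫ x, ψ x * trueFilter μ a0 a b t x ∂μ

/-- The filter variance `σ_t²(ψ) = ∫ (ψ − m_t(ψ))² f_{t|t} dμ`. -/
noncomputable def filterVariance {α : Type*} [MeasurableSpace α] (μ : Measure α)
    (a0 : α → ℝ) (a : ℕ → α → α → ℝ) (b : ℕ → α → ℝ) (t : ℕ) (ψ : α → ℝ) : ℝ :=
  ∫ x, (ψ x - filterMean μ a0 a b t ψ) ^ 2 * trueFilter μ a0 a b t x ∂μ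

/-- The one-step predictive density `p(y_{t+1} | y_{1:t}) = m_t(L_{t+1} 1)`, indexed by the time
`t` of the conditioning observations rather than by the time `t + 1` of the predicted one. -/
noncomputable def predictiveDensity {α : Type*} [MeasurableSpace α] (μ : Measure α)
    (a0 : α → ℝ) (a : ℕ → α → α → ℝ) (b : ℕ → α → ℝ) (t : ℕ) : ℝ :=
  filterMean μ a0 a b t (obsOp μ a b (t + 1) fun _ => 1)

theorem obsOpComp_succ_right {α : Type*} [MeasurableSpace α] (μ : Measure α)
    (a : ℕ → α → α → ℝ) (b : ℕ → α → ℝ) (n s : ℕ) (ψ : α → ℝ) :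
    obsOpComp μ a b (n + 1) s ψ = obsOpComp μ a b n s (obsOp μ a b (s + n) ψ) := by
  induction n generalizing s with
  | zero => rfl
  | succ n ih => rw [obsOpComp, ih, obsOpComp, Nat.add_right_comm, Nat.add_assoc]

section StateSpaceModel

variable {α : Type*} [MeasurableSpace α] {μ : Measure α} [SFinite μ]
  {a0 : α → ℝ} {a : ℕ → α → α → ℝ} {b : ℕ → α → ℝ} {g : α → ℝ}

theorem IsBoundedMeasurable.obsOp {t : ℕ} (hk : IsBoundedKernel μ fun x x' => a t x x' * b t x')
    (hg : IsBoundedMeasurable g) : IsBoundedMeasurable (obsOp μ a b t g) := by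
  change IsBoundedMeasurable fun x => ∫ x', a t x x' * (b t x' * g x') ∂μ
  simpa only [mul_assoc] using (hk.mul_right hg).isBoundedMeasurable_integral

theorem integral_obsOp_mul {t : ℕ} (hk : IsBoundedKernel μ fun x x' => a t x x' * b t x')
    {f : α → ℝ} (hf : Integrable f μ) (hg : IsBoundedMeasurable g) :
    ∫ x, obsOp μ a b t g x * f x ∂μ = ∫ x, markovOp μ (a t) f x * b t x * g x ∂μ := by
  simpa only [obsOp, markovOp, ← integral_mul_const (b t _), mul_assoc]
    using hk.integral_integral_mul_comm hf hg

theorem integrable_trueFilter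
    (hk : ∀ t, IsBoundedKernel μ fun x x' => a t x x' * b t x')
    (ha0 : Integrable a0 μ) (t : ℕ) : Integrable (trueFilter μ a0 a b t) μ := by
  induction t with
  | zero => exact ha0
  | succ t ih =>
    have hupdate := ((hk (t + 1)).integrable_prod ih).integral_prod_right
    simp only [← mul_assoc, integral_mul_const] at hupdate
    exact hupdate.div_const _

theorem integral_markovOp_mul_eq_predictiveDensity
    (hk : ∀ t, IsBoundedKernel μ fun x x' => a t x x' * b t x')
    (ha0 : Integrable a0 μ) (t : ℕ) :
    ∫ x, markovOp μ (a (t + 1)) (trueFilter μ a0 a b t) x * b (t + 1) x ∂μ =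
      predictiveDensity μ a0 a b t := by
  simpa only [mul_one, predictiveDensity, filterMean] using
    (integral_obsOp_mul (hk (t + 1)) (integrable_trueFilter hk ha0 t) (.const 1)).symm

theorem filterMean_obsOp
    (hk : ∀ t, IsBoundedKernel μ fun x x' => a t x x' * b t x')
    (ha0 : Integrable a0 μ) {t : ℕ} (hp : predictiveDensity μ a0 a b t ≠ 0)
    (hg : IsBoundedMeasurable g) :
    filterMean μ a0 a b t (obsOp μ a b (t + 1) g) =
      predictiveDensity μ a0 a b t * filterMean μ a0 a b (t + 1) g := by
  rw [filterMean, integral_obsOp_mul (hk (t + 1)) (integrable_trueFilter hk ha0 t) hg, filterMean,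
    ← integral_const_mul]
  congr 1 with x
  rw [trueFilter, bayesOp, integral_markovOp_mul_eq_predictiveDensity hk ha0]
  field_simp

theorem integral_trueFilter_succ
    (hk : ∀ t, IsBoundedKernel μ fun x x' => a t x x' * b t x')
    (ha0 : Integrable a0 μ) {t : ℕ} (hp : predictiveDensity μ a0 a b t ≠ 0) :
    ∫ x, trueFilter μ a0 a b (t + 1) x ∂μ = 1 := by
  simp only [trueFilter, bayesOp, integral_div, integral_markovOp_mul_eq_predictiveDensity hk ha0,
    div_self hp]

theorem filterMean_sub_filterMean
    (hk : ∀ t, IsBoundedKernel μ fun x x' => a t x x' * b t x')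
    (ha0 : Integrable a0 μ) {t : ℕ} (hp : predictiveDensity μ a0 a b t ≠ 0)
    (hg : IsBoundedMeasurable g) :
    filterMean μ a0 a b (t + 1) (fun x => g x - filterMean μ a0 a b (t + 1) g) = 0 := by
  have hf := integrable_trueFilter hk ha0 (t + 1)
  rw [filterMean]
  simp only [sub_mul]
  rw [integral_sub (hg.mul_integrable hf) (hf.const_mul _), integral_const_mul,
    integral_trueFilter_succ hk ha0 hp, mul_one, filterMean, sub_self]

theorem filterMean_obsOp_sub_filterMean
    (hk : ∀ t, IsBoundedKernel μ fun x x' => a t x x' * b t x')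
    (ha0 : Integrable a0 μ) {t : ℕ} (hp : predictiveDensity μ a0 a b t ≠ 0)
    (hg : IsBoundedMeasurable g) :
    filterMean μ a0 a b t (obsOp μ a b (t + 1) fun x => g x - filterMean μ a0 a b (t + 1) g) =
      0 := by
  rw [filterMean_obsOp hk ha0 hp (hg.sub_const _), filterMean_sub_filterMean hk ha0 hp hg, mul_zero]

theorem filterMean_obsOpComp
    (hk : ∀ t, IsBoundedKernel μ fun x x' => a t x x' * b t x')
    (ha0 : Integrable a0 μ) (hp : ∀ t, predictiveDensity μ a0 a b t ≠ 0)
    (n s : ℕ) (hg : IsBoundedMeasurable g) :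
    filterMean μ a0 a b s (obsOpComp μ a b (n + 1) (s + 1) g) =
      filterMean μ a0 a b s (obsOpComp μ a b (n + 1) (s + 1) fun _ => 1) *
        filterMean μ a0 a b (s + n + 1) g := by
  induction n generalizing g with
  | zero => exact filterMean_obsOp hk ha0 (hp s) hg
  | succ n ih =>
    have htime : s + 1 + (n + 1) = s + n + 1 + 1 := by omega
    rw [obsOpComp_succ_right _ _ _ (n + 1), obsOpComp_succ_right _ _ _ (n + 1) _ fun _ => 1, htime,
      ih (hg.obsOp (hk _)), ih ((IsBoundedMeasurable.const 1).obsOp (hk _)),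
      filterMean_obsOp hk ha0 (hp _) hg, mul_assoc]
    rfl

theorem filterMean_obsOpComp_one_succ
    (hk : ∀ t, IsBoundedKernel μ fun x x' => a t x x' * b t x')
    (ha0 : Integrable a0 μ) (hp : ∀ t, predictiveDensity μ a0 a b t ≠ 0)
    (n s : ℕ) :
    filterMean μ a0 a b s (obsOpComp μ a b (n + 2) (s + 1) fun _ => 1) =
      filterMean μ a0 a b s (obsOpComp μ a b (n + 1) (s + 1) fun _ => 1) *
        predictiveDensity μ a0 a b (s + n + 1) := by
  have htime : s + 1 + (n + 1) = s + n + 1 + 1 := by omega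
  rw [obsOpComp_succ_right _ _ _ (n + 1), htime]
  exact filterMean_obsOpComp hk ha0 hp n s ((IsBoundedMeasurable.const 1).obsOp (hk _))

theorem sum_div_sq_filterMean_obsOpComp_succ
    (hk : ∀ t, IsBoundedKernel μ fun x x' => a t x x' * b t x')
    (ha0 : Integrable a0 μ) (hp : ∀ t, predictiveDensity μ a0 a b t ≠ 0)
    (v : ℕ → (α → ℝ) → ℝ) (t : ℕ) (g : α → ℝ) :
    ∑ s ∈ Finset.Icc 1 (t + 1), v (s - 1) (obsOpComp μ a b (t + 1 + 1 - s) s g) /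
        filterMean μ a0 a b (s - 1) (obsOpComp μ a b (t + 1 + 1 - s) s fun _ => 1) ^ 2 =
      (v t (obsOp μ a b (t + 1) g) +
          ∑ s ∈ Finset.Icc 1 t, v (s - 1) (obsOpComp μ a b (t + 1 - s) s (obsOp μ a b (t + 1) g)) /
            filterMean μ a0 a b (s - 1) (obsOpComp μ a b (t + 1 - s) s fun _ => 1) ^ 2) /
        predictiveDensity μ a0 a b t ^ 2 := by
  rw [Finset.sum_Icc_succ_top (Nat.le_add_left 1 t), Nat.add_sub_cancel, Nat.add_sub_cancel_left,
    add_comm, add_div, Finset.sum_div]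
  refine congrArg₂ (· + ·) rfl (Finset.sum_congr rfl fun s hs => ?_)
  obtain ⟨hs1, hst⟩ := Finset.mem_Icc.1 hs
  obtain ⟨k, rfl⟩ := Nat.exists_eq_add_of_le' hs1
  obtain ⟨n, rfl⟩ := Nat.exists_eq_add_of_le hst
  have hlen : k + 1 + n + 1 - (k + 1) = n + 1 := by omega
  have hlen' : k + 1 + n + 1 + 1 - (k + 1) = n + 2 := by omega
  rw [hlen, hlen', Nat.add_sub_cancel, filterMean_obsOpComp_one_succ hk ha0 hp,
    obsOpComp_succ_right _ _ _ (n + 1), div_div, mul_pow, Nat.add_right_comm k n 1,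
    Nat.add_assoc (k + 1) n 1]

end StateSpaceModel

theorem asymptotic_variance_representation_general
    {α : Type*} [MeasurableSpace α] {μ : Measure α} [SFinite μ]
    {a0 : α → ℝ} {a : ℕ → α → α → ℝ} {b : ℕ → α → ℝ}
    (hk : ∀ t, IsBoundedKernel μ fun x x' => a t x x' * b t x') (ha0 : Integrable a0 μ)
    (hp : ∀ t, predictiveDensity μ a0 a b t ≠ 0)
    {V : ℕ → (α → ℝ) → ℝ} (hV0 : ∀ ψ, V 0 ψ = filterVariance μ a0 a b 0 ψ)
    (hVsucc : ∀ t ψ, V (t + 1) ψ = filterVariance μ a0 a b (t + 1) ψ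
      + V t (obsOp μ a b (t + 1) fun x => ψ x - filterMean μ a0 a b (t + 1) ψ)
        / predictiveDensity μ a0 a b t ^ 2)
    {ψ : α → ℝ} (hψ : IsBoundedMeasurable ψ) :
    (∀ t : ℕ,
      V t ψ = filterVariance μ a0 a b t ψ + ∑ s ∈ Finset.Icc 1 t,
        filterVariance μ a0 a b (s - 1)
            (obsOpComp μ a b (t + 1 - s) s fun x => ψ x - filterMean μ a0 a b t ψ)
          / filterMean μ a0 a b (s - 1) (obsOpComp μ a b (t + 1 - s) s fun _ => 1) ^ 2)
    ∧ ∀ t : ℕ, filterMean μ a0 a b t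
        (obsOp μ a b (t + 1) fun x => ψ x - filterMean μ a0 a b (t + 1) ψ) = 0 := by
  refine ⟨fun t => ?_, fun t => filterMean_obsOp_sub_filterMean hk ha0 (hp t) hψ⟩
  induction t generalizing ψ with
  | zero => simp [hV0]
  | succ t ih =>
    have hχ := (hψ.sub_const (filterMean μ a0 a b (t + 1) ψ)).obsOp (hk (t + 1))
    rw [hVsucc, ih hχ, filterMean_obsOp_sub_filterMean hk ha0 (hp t) hψ]
    simp only [sub_zero, sum_div_sq_filterMean_obsOpComp_succ hk ha0 hp (filterVariance μ a0 a b)]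

/-- Representation (29) of the asymptotic variance of the particle filter with
i.i.d. resampling: with `V_0(ψ) = σ_0²(ψ)` and
`V_t(ψ) = σ_t²(ψ) + p(y_t|y_{1:t-1})⁻² V_{t-1}(L_t(ψ − m_t(ψ)))`, one has
`V_t(ψ) = σ_t²(ψ) + Σ_{s=1}^t σ_{s-1}²(L_{s:t}(ψ − m_t(ψ))) / p(y_{s:t}|y_{1:s-1})²`
where `p(y_{s:t}|y_{1:s-1}) = m_{s-1}(L_{s:t} 1)`; this representation rests on the
identity `m_{t-1}(L_t(ψ − m_t(ψ))) = 0`. -/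
theorem asymptotic_variance_representation
    {α : Type*} [MeasurableSpace α] (μ : Measure α) [SigmaFinite μ]
    (a0 : α → ℝ) (a : ℕ → α → α → ℝ) (b : ℕ → α → ℝ)
    (ha0_meas : Measurable a0) (ha0_nonneg : ∀ x, 0 ≤ a0 x)
    (ha0_int : Integrable a0 μ) (ha0_one : (∫ x, a0 x ∂μ) = 1)
    (ha_meas : ∀ t, Measurable (Function.uncurry (a t)))
    (ha_nonneg : ∀ t x' x, 0 ≤ a t x' x)
    (ha_kernel : ∀ t x', ∫ x, a t x' x ∂μ = 1)
    (hb_meas : ∀ t, Measurable (b t))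
    (hb_nonneg : ∀ t x, 0 ≤ b t x)
    (hb_bdd : ∀ t, ∃ C, ∀ x, b t x ≤ C)
    -- the filter moments m_t, σ_t² and the prediction densities p(y_t | y_{1:t-1})
    (m : ℕ → (α → ℝ) → ℝ)
    (hm : ∀ t ψ, m t ψ = ∫ x, ψ x * trueFilter μ a0 a b t x ∂μ)
    (σ2 : ℕ → (α → ℝ) → ℝ)
    (hσ2 : ∀ t ψ, σ2 t ψ = ∫ x, (ψ x - m t ψ) ^ 2 * trueFilter μ a0 a b t x ∂μ)
    (p : ℕ → ℝ)
    (hp : ∀ t, p (t + 1) = m t (obsOp μ a b (t + 1) fun _ => 1))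
    (hp_pos : ∀ t, 0 < p (t + 1))
    -- the asymptotic variance, defined recursively
    (V : ℕ → (α → ℝ) → ℝ)
    (hV0 : ∀ ψ, V 0 ψ = σ2 0 ψ)
    (hVsucc : ∀ t ψ, V (t + 1) ψ = σ2 (t + 1) ψ
      + V t (obsOp μ a b (t + 1) fun x => ψ x - m (t + 1) ψ) / p (t + 1) ^ 2) :
    ∀ (ψ : α → ℝ), Measurable ψ → (∃ C, ∀ x, |ψ x| ≤ C) →
      (∀ t : ℕ,
        V t ψ = σ2 t ψ + ∑ s ∈ Finset.Icc 1 t,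
          σ2 (s - 1) (obsOpComp μ a b (t + 1 - s) s fun x => ψ x - m t ψ)
            / (m (s - 1) (obsOpComp μ a b (t + 1 - s) s fun _ => 1)) ^ 2)
      ∧ (∀ t : ℕ, m t (obsOp μ a b (t + 1) fun x => ψ x - m (t + 1) ψ) = 0) := by
  obtain rfl : m = filterMean μ a0 a b := funext₂ hm
  obtain rfl : σ2 = filterVariance μ a0 a b := funext₂ hσ2
  simp only [hp] at hp_pos hVsucc
  have hk t : IsBoundedKernel μ fun x x' => a t x x' * b t x' :=
    (IsBoundedKernel.of_integral_eq_one (ha_meas t) (ha_nonneg t) (ha_kernel t)).mul_right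
      (.of_nonneg_of_le (hb_meas t) (hb_nonneg t) (hb_bdd t))
  exact fun ψ hψ hψ_bdd => asymptotic_variance_representation_general hk ha0_int
    (fun t => (hp_pos t).ne') hV0 hVsucc ⟨hψ, hψ_bdd⟩
end
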